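/- arXiv:0910.2061 — 4 statements merged into one kernel-verified Lean document; each statement's English description precedes it below -/
import Mathlib

section
/- Let X be a compact metric space, let n be a positive integer, and let a ∈ M_n(C(X)) be positive. Let g : X → ℤ≥0 be upper semicontinuous and suppose that rank(a(x)) ≥ g(x) for every x ∈ X. Then there exists η > 0 such that for every x ∈ X the number of eigenvalues of the matrix a(x), counted with multiplicity, that are strictly greater than η is at least g(x) (equivalently, the spectral projection χ_{(η,∞)}(a(x)) has rank at least g(x)). -/
open scoped ComplexOrder

/-- Quadratic form in the eigenbasis. -/
lemma quad_eq {n : ℕ} {A : Matrix (Fin n) (Fin n) ℂ} (hA : A.IsHermitian)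
    (v : EuclideanSpace ℂ (Fin n)) :
    (inner ℂ v (Matrix.toEuclideanCLM (n := Fin n) (𝕜 := ℂ) A v)).re =
      ∑ i, hA.eigenvalues i * ‖inner ℂ (hA.eigenvectorBasis i) v‖ ^ 2 := by
  have hb : ∀ i, Matrix.toEuclideanCLM (n := Fin n) (𝕜 := ℂ) A (hA.eigenvectorBasis i) =
      ((hA.eigenvalues i : ℝ) : ℂ) • hA.eigenvectorBasis i := by
    intro i
    have h := hA.mulVec_eigenvectorBasis i
    ext j
    have h2 := congrFun h j
    simpa using h2
  have hv : Matrix.toEuclideanCLM (n := Fin n) (𝕜 := ℂ) A v =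
      ∑ i, (inner ℂ (hA.eigenvectorBasis i) v * ((hA.eigenvalues i : ℝ) : ℂ)) •
        hA.eigenvectorBasis i := by
    conv_lhs => rw [← hA.eigenvectorBasis.sum_repr' v]
    rw [map_sum]
    refine Finset.sum_congr rfl fun i _ => ?_
    rw [map_smul, hb, smul_smul]
  rw [hv, inner_sum, Complex.re_sum]
  refine Finset.sum_congr rfl fun i _ => ?_
  rw [inner_smul_right, ← inner_conj_symm v (hA.eigenvectorBasis i)]
  have : ∀ (z : ℂ) (r : ℝ), (z * (r : ℂ) * (starRingEnd ℂ) z).re = r * ‖z‖ ^ 2 := by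
    intro z r
    rw [← Complex.normSq_eq_norm_sq, Complex.normSq_apply]
    simp
    ring
  exact this _ _

lemma local_claim {n : ℕ} {A : Matrix (Fin n) (Fin n) ℂ} (hA : A.PosSemidef) :
    ∃ η : ℝ, 0 < η ∧ ∀ (B : Matrix (Fin n) (Fin n) ℂ) (hB : B.IsHermitian),
      ‖Matrix.toEuclideanCLM (n := Fin n) (𝕜 := ℂ) B -
        Matrix.toEuclideanCLM (n := Fin n) (𝕜 := ℂ) A‖ < η →
      A.rank ≤ (Finset.univ.filter fun i : Fin n => η < hB.eigenvalues i).card := by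
  have h1 : ∀ᶠ δ : ℝ in nhdsWithin 0 (Set.Ioi 0), ∀ i : Fin n,
      hA.isHermitian.eigenvalues i ≠ 0 → 2 * δ < hA.isHermitian.eigenvalues i := by
    rw [Filter.eventually_all]
    intro i
    by_cases h : hA.isHermitian.eigenvalues i = 0
    · simp [h]
    · have hpos : 0 < hA.isHermitian.eigenvalues i :=
        lt_of_le_of_ne (hA.eigenvalues_nonneg i) (Ne.symm h)
      have : ∀ᶠ δ : ℝ in nhds 0, 2 * δ < hA.isHermitian.eigenvalues i :=
        (by fun_prop : Continuous fun δ : ℝ => 2 * δ).continuousAt.eventually_lt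
          continuousAt_const (by simpa using hpos)
      filter_upwards [nhdsWithin_le_nhds this] with δ hδ _ using hδ
  obtain ⟨η, hη, hη0⟩ := (h1.and self_mem_nhdsWithin).exists
  refine ⟨η, hη0, fun B hB hBA => ?_⟩
  have hη0' : 0 < η := hη0
  by_contra hlt
  push Not at hlt
  set bA := hA.isHermitian.eigenvectorBasis
  set bB := hB.eigenvectorBasis
  let L : EuclideanSpace ℂ (Fin n) →ₗ[ℂ]
      (({i // hA.isHermitian.eigenvalues i = 0} ⊕ {i // η < hB.eigenvalues i}) → ℂ) :=
    LinearMap.pi fun s => Sum.elim (fun i => (innerSL ℂ (bA i.1)).toLinearMap)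
      (fun i => (innerSL ℂ (bB i.1)).toLinearMap) s
  have hdim : Module.finrank ℂ
      (({i // hA.isHermitian.eigenvalues i = 0} ⊕ {i // η < hB.eigenvalues i}) → ℂ) <
      Module.finrank ℂ (EuclideanSpace ℂ (Fin n)) := by
    rw [Module.finrank_fintype_fun_eq_card, finrank_euclideanSpace, Fintype.card_sum,
      Fintype.card_subtype (fun i => η < hB.eigenvalues i)]
    rw [hA.isHermitian.rank_eq_card_non_zero_eigs] at hlt
    have := Fintype.card_subtype_compl (fun i => hA.isHermitian.eigenvalues i = 0)
    have h2 := Fintype.card_subtype_le (fun i => hA.isHermitian.eigenvalues i = 0)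
    simp only [ne_eq] at *
    omega
  obtain ⟨v, hv, hv0⟩ := (Submodule.ne_bot_iff _).1 (LinearMap.ker_ne_bot_of_finrank_lt (f := L) hdim)
  rw [LinearMap.mem_ker] at hv
  have hvA : ∀ i, hA.isHermitian.eigenvalues i = 0 → inner ℂ (bA i) v = 0 := fun i hi => by
    simpa [L] using congrFun hv (Sum.inl ⟨i, hi⟩)
  have hvB : ∀ i, η < hB.eigenvalues i → inner ℂ (bB i) v = 0 := fun i hi => by
    simpa [L] using congrFun hv (Sum.inr ⟨i, hi⟩)
  have qA := quad_eq hA.isHermitian v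
  have qB := quad_eq hB v
  have lA : 2 * η * ‖v‖ ^ 2 ≤ ∑ i, hA.isHermitian.eigenvalues i * ‖inner ℂ (bA i) v‖ ^ 2 := by
    rw [← bA.sum_sq_norm_inner_right v, Finset.mul_sum]
    refine Finset.sum_le_sum fun i _ => ?_
    by_cases h : hA.isHermitian.eigenvalues i = 0
    · simp [hvA i h]
    · exact mul_le_mul_of_nonneg_right (hη i h).le (by positivity)
  have lB : ∑ i, hB.eigenvalues i * ‖inner ℂ (bB i) v‖ ^ 2 ≤ η * ‖v‖ ^ 2 := by
    rw [← bB.sum_sq_norm_inner_right v, Finset.mul_sum]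
    refine Finset.sum_le_sum fun i _ => ?_
    by_cases h : η < hB.eigenvalues i
    · simp [hvB i h]
    · exact mul_le_mul_of_nonneg_right (not_lt.1 h) (by positivity)
  rw [← qA] at lA
  rw [← qB] at lB
  set TA := Matrix.toEuclideanCLM (n := Fin n) (𝕜 := ℂ) A
  set TB := Matrix.toEuclideanCLM (n := Fin n) (𝕜 := ℂ) B
  have hd : |(inner ℂ v ((TB - TA) v)).re| ≤ ‖TB - TA‖ * ‖v‖ ^ 2 := by
    calc _ ≤ ‖inner ℂ v ((TB - TA) v)‖ := Complex.abs_re_le_norm _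
      _ ≤ ‖v‖ * ‖(TB - TA) v‖ := norm_inner_le_norm _ _
      _ ≤ ‖v‖ * (‖TB - TA‖ * ‖v‖) := by gcongr; exact (TB - TA).le_opNorm v
      _ = _ := by ring
  rw [sub_apply, inner_sub_right, Complex.sub_re] at hd
  have hvpos : 0 < ‖v‖ ^ 2 := by positivity
  have := mul_lt_mul_of_pos_right hBA hvpos
  have := neg_abs_le ((inner ℂ v (TB v)).re - (inner ℂ v (TA v)).re)
  linarith


/-- For a positive element `a` of `M_n(C(X))` over a compact metric space `X`,
and an upper semicontinuous `g : X → ℤ≥0` with `rank(a(x)) ≥ g(x)` everywhere, there is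
`η > 0` such that for every `x` the number of eigenvalues of `a(x)` (with multiplicity)
strictly greater than `η` is at least `g(x)`. -/
theorem stmt0 {X : Type*} [MetricSpace X] [CompactSpace X] (n : ℕ) (hn : 0 < n)
    (a : C(X, Matrix (Fin n) (Fin n) ℂ)) (ha : ∀ x, (a x).PosSemidef)
    (g : X → ℕ) (hg : UpperSemicontinuous g)
    (hrank : ∀ x, g x ≤ (a x).rank) :
    ∃ η : ℝ, 0 < η ∧ ∀ x : X,
      g x ≤ (Finset.univ.filter fun i : Fin n =>
        η < (ha x).isHermitian.eigenvalues i).card := by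
  have key : ∀ s : Set X, IsCompact s → ∃ η : ℝ, 0 < η ∧ ∀ x ∈ s,
      g x ≤ (Finset.univ.filter fun i : Fin n =>
        η < (ha x).isHermitian.eigenvalues i).card := by
    intro s hs
    refine hs.induction_on (p := fun s => ∃ η : ℝ, 0 < η ∧ ∀ x ∈ s,
      g x ≤ (Finset.univ.filter fun i : Fin n =>
        η < (ha x).isHermitian.eigenvalues i).card) ⟨1, one_pos, by simp⟩ ?_ ?_ ?_
    · rintro s t hst ⟨η, h0, h⟩
      exact ⟨η, h0, fun x hx => h x (hst hx)⟩
    · rintro s t ⟨η, h0, h⟩ ⟨θ, h0', h'⟩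
      refine ⟨min η θ, lt_min h0 h0', ?_⟩
      rintro x (hx | hx)
      · refine (h x hx).trans (Finset.card_le_card fun i => ?_)
        simp only [Finset.mem_filter, Finset.mem_univ, true_and]
        exact fun hi => (min_le_left _ _).trans_lt hi
      · refine (h' x hx).trans (Finset.card_le_card fun i => ?_)
        simp only [Finset.mem_filter, Finset.mem_univ, true_and]
        exact fun hi => (min_le_right _ _).trans_lt hi
    · intro x _
      obtain ⟨η, h0, h⟩ := local_claim (ha x)
      have hc : Continuous fun y => Matrix.toEuclideanCLM (n := Fin n) (𝕜 := ℂ) (a y) :=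
        (LinearMap.continuous_of_finiteDimensional
          (Matrix.toEuclideanCLM (n := Fin n) (𝕜 := ℂ)).toAlgEquiv.toLinearMap).comp a.continuous
      have e1 : ∀ᶠ y in nhds x, ‖Matrix.toEuclideanCLM (n := Fin n) (𝕜 := ℂ) (a y) -
          Matrix.toEuclideanCLM (n := Fin n) (𝕜 := ℂ) (a x)‖ < η := by
        have := Metric.tendsto_nhds.1 (hc.tendsto x) η h0
        simpa only [dist_eq_norm] using this
      have e2 : ∀ᶠ y in nhds x, g y < g x + 1 := hg x _ (Nat.lt_succ_self _)
      refine ⟨_, mem_nhdsWithin_of_mem_nhds (e1.and e2), η, h0, ?_⟩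
      rintro y ⟨hy1, hy2⟩
      exact (Nat.lt_succ_iff.1 hy2).trans ((hrank x).trans (h (a y) (ha y).isHermitian hy1))
  obtain ⟨η, h0, h⟩ := key Set.univ isCompact_univ
  exact ⟨η, h0, fun x => h x (Set.mem_univ x)⟩
end

section
/- Let X be a compact metric space of finite covering dimension d, let n, k be positive integers, and let a ∈ M_n(C(X)) be positive with rank(a(x)) ≥ k for all x ∈ X. Then there is a homotopy h : [0,1] → M_n(C(X))₊ such that: (i) h(0) = a; (ii) rank(h(t)(x)) = rank(a(x)) for all t ∈ [0,1] and all x ∈ X; (iii) there is a trivial projection p ∈ M_n(C(X)) of constant rank at least k − d which is a direct summand of h(1), i.e., p·h(1) = h(1)·p = p. -/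
open scoped ComplexOrder unitInterval

/-- `X` has Lebesgue covering dimension at most `d`: every open cover admits an open
refinement in which every point belongs to at most `d + 1` members. -/
def HasCovDimLE (X : Type*) [TopologicalSpace X] (d : ℕ) : Prop :=
  ∀ 𝒰 : Set (Set X), (∀ U ∈ 𝒰, IsOpen U) → ⋃₀ 𝒰 = Set.univ →
    ∃ 𝒱 : Set (Set X), (∀ V ∈ 𝒱, IsOpen V) ∧ ⋃₀ 𝒱 = Set.univ ∧
      (∀ V ∈ 𝒱, ∃ U ∈ 𝒰, V ⊆ U) ∧
      ∀ x : X, {V ∈ 𝒱 | x ∈ V}.Finite ∧ {V ∈ 𝒱 | x ∈ V}.ncard ≤ d + 1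

/-- `X` has Lebesgue covering dimension exactly `d`: `d` is the least natural number
such that `HasCovDimLE X d`. -/
def IsCovDim (X : Type*) [TopologicalSpace X] (d : ℕ) : Prop :=
  HasCovDimLE X d ∧ ∀ e : ℕ, HasCovDimLE X e → d ≤ e

lemma gp_finrank (n m j : ℕ) (l : Fin m) (b : Matrix (Fin n) (Fin n) ℂ) :
    Module.finrank ℝ ((Fin j → ℝ) × ({s : Fin m // s ≠ l} → ℂ) ×
      (Fin n → {s : Fin m // s ≠ l} → ℂ) × (LinearMap.ker b.mulVecLin)) + 2 * b.rank + 2 + 2 * n =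
      j + 2 * m + 2 * n * m + 2 * n := by
  have hk : Module.finrank ℂ (LinearMap.ker b.mulVecLin) + b.rank = n := by
    have := LinearMap.finrank_range_add_finrank_ker b.mulVecLin
    simp only [Module.finrank_fin_fun] at this
    rw [Matrix.rank]; omega
  have hk2 : Module.finrank ℝ (LinearMap.ker b.mulVecLin) = 2 * Module.finrank ℂ (LinearMap.ker b.mulVecLin) := 
    finrank_real_of_complex _
  have hc : Fintype.card {s : Fin m // s ≠ l} + 1 = m := by
    have := Fintype.card_subtype_compl (fun s => s = l)
    have hm := l.pos
    simp only [Fintype.card_fin, Fintype.card_unique] at this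
    have h2 : Fintype.card {s : Fin m // s ≠ l} = m - 1 := by
      rw [← this]
    omega
  have hfree : Module.Free ℝ (LinearMap.ker b.mulVecLin) := Module.Free.of_divisionRing ℝ _
  have hfin : Module.Finite ℝ (LinearMap.ker b.mulVecLin) := FiniteDimensional.complexToReal _
  generalize (LinearMap.ker b.mulVecLin) = K at *
  rw [Module.finrank_prod, Module.finrank_prod, Module.finrank_prod]
  simp only [Module.finrank_pi, Module.finrank_pi_fintype, Complex.finrank_real_complex, hk2, Finset.sum_const, Finset.card_univ, Fintype.card_fin, smul_eq_mul]
  generalize Fintype.card {s : Fin m // s ≠ l} = c at *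
  have e1 : 2 * n * m = n * (c * 2) + 2 * n := by rw [← hc]; ring
  rw [e1]
  omega

lemma gp_dimH (n m j : ℕ) (hm : 0 < m) (b : Matrix (Fin n) (Fin n) ℂ) (W : Fin j → Matrix (Fin n) (Fin m) ℂ)
    (hlt : j + 2 * m < 2 * b.rank + 2) :
    dimH {N : Fin n → Fin m → ℂ | ∃ c : Fin j → ℝ, ∃ w : Fin m → ℂ, w ≠ 0 ∧
      (b * (Matrix.of N - ∑ i, c i • W i)).mulVec w = 0} <
      (Module.finrank ℝ (Fin n → Fin m → ℂ) : ℕ) := by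
  classical
  let f : ∀ l : Fin m, ((Fin j → ℝ) × ({s : Fin m // s ≠ l} → ℂ) ×
      (Fin n → {s : Fin m // s ≠ l} → ℂ) × (LinearMap.ker b.mulVecLin)) → (Fin n → Fin m → ℂ) :=
    fun l e i s => (if h : s = l then (e.2.2.2 : Fin n → ℂ) i - ∑ s', e.2.2.1 i s' * e.2.1 s'
      else e.2.2.1 i ⟨s, h⟩) + ∑ q, (e.1 q : ℂ) * W q i s
  have hf : ∀ l, ContDiff ℝ 1 (f l) := by
    intro l
    have hK : ContDiff ℝ 1 (fun z : LinearMap.ker b.mulVecLin => (z : Fin n → ℂ)) :=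
      ((LinearMap.ker b.mulVecLin).subtypeL.restrictScalars ℝ).contDiff
    have hof : ContDiff ℝ 1 (fun z : ℝ => (z : ℂ)) := Complex.ofRealCLM.contDiff
    rw [contDiff_pi]; intro i
    rw [contDiff_pi]; intro s
    have h1 : ContDiff ℝ 1 (fun e : ((Fin j → ℝ) × ({s : Fin m // s ≠ l} → ℂ) ×
      (Fin n → {s : Fin m // s ≠ l} → ℂ) × (LinearMap.ker b.mulVecLin)) => (e.2.2.2 : Fin n → ℂ) i) :=
      (contDiff_apply ℝ ℂ i).comp (hK.comp (by fun_prop))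
    have h2 : ∀ q, ContDiff ℝ 1 (fun e : ((Fin j → ℝ) × ({s : Fin m // s ≠ l} → ℂ) ×
      (Fin n → {s : Fin m // s ≠ l} → ℂ) × (LinearMap.ker b.mulVecLin)) => ((e.1 q : ℝ) : ℂ)) := 
      fun q => hof.comp (by fun_prop)
    simp only [f]
    by_cases h : s = l
    · simp only [h, dif_pos]
      fun_prop
    · simp only [h, dif_neg, not_false_eq_true]
      fun_prop
  have hsub : {N : Fin n → Fin m → ℂ | ∃ c : Fin j → ℝ, ∃ w : Fin m → ℂ, w ≠ 0 ∧
      (b * (Matrix.of N - ∑ i, c i • W i)).mulVec w = 0} ⊆ ⋃ l, Set.range (f l) := by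
    rintro N ⟨c, w, hw, hb⟩
    obtain ⟨l, hl⟩ := Function.ne_iff.mp hw
    simp only [Pi.zero_apply] at hl
    rw [Set.mem_iUnion]
    refine ⟨l, ?_⟩
    set M := Matrix.of N - ∑ i, c i • W i with hM
    have hz : (M.mulVec ((w l)⁻¹ • w)) ∈ LinearMap.ker b.mulVecLin := by
      rw [LinearMap.mem_ker, Matrix.mulVecLin_apply, Matrix.mulVec_smul, Matrix.mulVec_smul, Matrix.mulVec_mulVec, hb, smul_zero]
    refine ⟨⟨c, fun s => (w l)⁻¹ * w s, fun i s => M i s, ⟨_, hz⟩⟩, ?_⟩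
    have hMN : ∀ i s, M i s + ∑ q, (c q : ℂ) * W q i s = N i s := by
      intro i s
      simp [hM, Matrix.sum_apply]
    funext i s
    rw [← hMN i s]
    simp only [f]
    congr 1
    split_ifs with h
    · subst h
      rw [sub_eq_iff_eq_add]
      simp only [Matrix.mulVec, dotProduct, Pi.smul_apply, smul_eq_mul]
      rw [Fintype.sum_eq_add_sum_subtype_ne _ s, inv_mul_cancel₀ hl, mul_one]
    · rfl
  refine lt_of_le_of_lt (dimH_mono hsub) ?_
  rw [dimH_iUnion]
  have hfr : Module.finrank ℝ (Fin n → Fin m → ℂ) = 2 * n * m := by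
    simp only [Module.finrank_pi_fintype, Complex.finrank_real_complex, Finset.sum_const, Finset.card_univ, Fintype.card_fin, smul_eq_mul]
    ring
  have hb : ∀ l, dimH (Set.range (f l)) ≤ ((2 * n * m - 1 : ℕ) : ENNReal) := by
    intro l
    refine (hf l).dimH_range_le.trans ?_
    have := gp_finrank n m j l b
    exact_mod_cast (by omega)
  have hpos : 0 < 2 * n * m := by
    have : b.rank ≤ n := by simpa using b.rank_le_card_width
    have : 0 < n := by omega
    positivity
  refine lt_of_le_of_lt (iSup_le hb) ?_
  rw [hfr]
  exact_mod_cast (by omega)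

/-- general position: avoid finitely many bad sets. -/
lemma gp_exists {n m : ℕ} (hm : 0 < m) {κ : Type*} [Finite κ] (j : κ → ℕ)
    (b : κ → Matrix (Fin n) (Fin n) ℂ) (W : ∀ q, Fin (j q) → Matrix (Fin n) (Fin m) ℂ)
    (hlt : ∀ q, j q + 2 * m < 2 * (b q).rank + 2) :
    ∃ N : Matrix (Fin n) (Fin m) ℂ, ∀ q, ∀ c : Fin (j q) → ℝ, ∀ w : Fin m → ℂ,
      (b q * (N - ∑ i, c i • W q i)).mulVec w = 0 → w = 0 := by
  let S : κ → Set (Fin n → Fin m → ℂ) := fun q => {N | ∃ c : Fin (j q) → ℝ, ∃ w : Fin m → ℂ, w ≠ 0 ∧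
      (b q * (Matrix.of N - ∑ i, c i • W q i)).mulVec w = 0}
  have hd : Dense (⋃ q, S q)ᶜ := by
    rcases isEmpty_or_nonempty κ with he | he
    · simp
    apply dense_compl_of_dimH_lt_finrank
    rw [dimH_iUnion]
    obtain ⟨q, hq⟩ := Finite.exists_max (fun q => dimH (S q))
    exact lt_of_le_of_lt (iSup_le hq) (gp_dimH n m (j q) hm (b q) (W q) (hlt q))
  obtain ⟨N, hN⟩ := hd.nonempty
  refine ⟨Matrix.of N, fun q c w h => ?_⟩
  by_contra hw
  exact hN (Set.mem_iUnion.mpr ⟨q, c, w, hw, h⟩)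

def MInj {n m : ℕ} (M : Matrix (Fin n) (Fin m) ℂ) : Prop := ∀ w, M.mulVec w = 0 → w = 0

def GoodT {n m j : ℕ} (b : Matrix (Fin n) (Fin n) ℂ) (W : Fin j → Matrix (Fin n) (Fin m) ℂ) : Prop :=
  ∀ c : Fin j → ℝ, c ≠ 0 → MInj (b * ∑ i, c i • W i)

lemma GoodT.snoc {n m j : ℕ} {b : Matrix (Fin n) (Fin n) ℂ} {W : Fin j → Matrix (Fin n) (Fin m) ℂ}
    (h : GoodT b W) {N : Matrix (Fin n) (Fin m) ℂ}
    (hN : ∀ c : Fin j → ℝ, ∀ w : Fin m → ℂ, (b * (N - ∑ i, c i • W i)).mulVec w = 0 → w = 0) :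
    GoodT b (Fin.snoc (α := fun _ => Matrix (Fin n) (Fin m) ℂ) W N) := by
  intro c hc w hw
  rw [Fin.sum_univ_castSucc] at hw
  simp only [Fin.snoc_castSucc, Fin.snoc_last] at hw
  by_cases hl : c (Fin.last j) = 0
  · rw [hl, zero_smul, add_zero] at hw
    refine h (fun i => c i.castSucc) ?_ w hw
    intro h0
    apply hc
    funext i
    refine Fin.lastCases hl (fun i => congrFun h0 i) i
  · apply hN (fun i => - (c (Fin.last j))⁻¹ * c i.castSucc) w
    have : N - ∑ i, (- (c (Fin.last j))⁻¹ * c (Fin.castSucc i)) • W i =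
        (c (Fin.last j))⁻¹ • (∑ i, c (Fin.castSucc i) • W i + c (Fin.last j) • N) := by
      rw [smul_add, smul_smul, inv_mul_cancel₀ hl, one_smul, Finset.smul_sum]
      simp only [neg_mul, neg_smul, Finset.sum_neg_distrib, smul_smul]
      abel
    rw [this, Matrix.mul_smul, Matrix.smul_mulVec, hw, smul_zero]

lemma isOpen_goodT {X : Type*} [TopologicalSpace X] {n m j : ℕ} {a : X → Matrix (Fin n) (Fin n) ℂ}
    (ha : Continuous a) (W : Fin j → Matrix (Fin n) (Fin m) ℂ) : IsOpen {x | GoodT (a x) W} := by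
  let K := Metric.sphere (0 : Fin j → ℝ) 1 × Metric.sphere (0 : Fin m → ℂ) 1
  let Z : Set (X × K) := {p | (a p.1 * ∑ i, (p.2.1 : Fin j → ℝ) i • W i).mulVec (p.2.2 : Fin m → ℂ) = 0}
  have hZ : IsClosed Z := by
    apply isClosed_eq _ continuous_const
    apply Continuous.matrix_mulVec
    · apply Continuous.matrix_mul
      · fun_prop
      · apply continuous_finsetSum
        intro i _
        have h1 : Continuous fun p : X × K => (p.2.1 : Fin j → ℝ) i :=
          (continuous_apply i).comp (continuous_subtype_val.comp (continuous_fst.comp continuous_snd))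
        exact h1.smul continuous_const
    · exact continuous_subtype_val.comp (continuous_snd.comp continuous_snd)
  have hc := isClosedMap_fst_of_compactSpace (X := X) (Y := K) Z hZ
  have : {x | GoodT (a x) W} = (Prod.fst '' Z)ᶜ := by
    ext x
    simp only [Set.mem_ofPred_eq, Set.mem_compl_iff, Set.mem_image, not_exists, not_and]
    constructor
    · rintro h ⟨y, c, w⟩ hz rfl
      have hc0 : (c : Fin j → ℝ) ≠ 0 := ne_zero_of_mem_unit_sphere c
      have hw0 : (w : Fin m → ℂ) ≠ 0 := ne_zero_of_mem_unit_sphere w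
      exact hw0 (h _ hc0 _ hz)
    · intro h c hc w hw
      by_contra hw0
      have e1 : (‖c‖⁻¹ • c) ∈ Metric.sphere (0 : Fin j → ℝ) 1 := by
        simp [norm_smul, hc]
      have e2 : (((‖w‖⁻¹ : ℝ) : ℂ) • w) ∈ Metric.sphere (0 : Fin m → ℂ) 1 := by
        simp [norm_smul, hw0]
      refine h ⟨x, ⟨_, e1⟩, ⟨_, e2⟩⟩ ?_ rfl
      simp only [Z, Set.mem_ofPred_eq, Pi.smul_apply, smul_eq_mul, mul_smul]
      rw [← Finset.smul_sum, Matrix.mul_smul, Matrix.smul_mulVec, Matrix.mulVec_smul, hw]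
      simp
  rw [this]
  exact hc.isOpen_compl

lemma layers {X : Type*} [MetricSpace X] [CompactSpace X] {n m d : ℕ} (hm : 0 < m)
    (a : X → Matrix (Fin n) (Fin n) ℂ) (ha : Continuous a) (hr : ∀ x, m + d ≤ (a x).rank)
    (hn : m + d ≤ n) (C : Matrix (Fin n) (Fin m) ℂ) (hC : MInj C) (j : ℕ) (hj : j ≤ d + 1) :
    ∃ (s : ℕ → Finset X) (D : ℕ → X → Set X) (V : ℕ → X → Matrix (Fin n) (Fin m) ℂ),
      (∀ c < j, ∀ y, IsClosed (D c y)) ∧ (∀ c < j, ∀ x, ∃ y ∈ s c, x ∈ interior (D c y)) ∧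
      ∀ x, ∀ ς : Fin j → X, (∀ c : Fin j, ς c ∈ s c ∧ x ∈ D c (ς c)) →
        GoodT (a x) (fun c => V c (ς c)) ∧
        GoodT 1 (Fin.cons (α := fun _ => Matrix (Fin n) (Fin m) ℂ) C (fun c : Fin j => V c (ς c))) := by
  classical
  induction j with
  | zero =>
    refine ⟨fun _ => ∅, fun _ _ => ∅, fun _ _ => 0, by simp, by simp, ?_⟩
    intro x ς _
    refine ⟨fun c hc => absurd (Subsingleton.elim c 0) hc, fun c hc w hw => ?_⟩
    have h0 : c 0 ≠ 0 := by
      intro h; apply hc; funext i; fin_cases i; simpa using h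
    rw [Matrix.one_mul, Fin.sum_univ_succ] at hw
    simp only [Fin.cons_zero, Finset.univ_eq_empty, Finset.sum_empty, add_zero] at hw
    rw [Matrix.smul_mulVec, smul_eq_zero] at hw
    exact hC w (hw.resolve_left h0)
  | succ j ih =>
    obtain ⟨s, D, V, hcl, hcov, hg⟩ := ih (by omega)
    have key : ∀ x : X, ∃ N : Matrix (Fin n) (Fin m) ℂ, ∃ B : Set X, IsClosed B ∧ B ∈ nhds x ∧
        ∀ z ∈ B, ∀ ς : Fin j → X, (∀ c : Fin j, ς c ∈ s c ∧ z ∈ D c (ς c)) →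
          GoodT (a z) (Fin.snoc (α := fun _ => Matrix (Fin n) (Fin m) ℂ) (fun c : Fin j => V c (ς c)) N) ∧
          GoodT 1 (Fin.cons (α := fun _ => Matrix (Fin n) (Fin m) ℂ) C
            (Fin.snoc (α := fun _ => Matrix (Fin n) (Fin m) ℂ) (fun c : Fin j => V c (ς c)) N)) := by
      intro x
      let F : Finset (Fin j → X) := Fintype.piFinset (fun c : Fin j => s c)
      obtain ⟨N, hN⟩ := gp_exists (n := n) (m := m) hm (κ := F × Bool) (fun _ => j + 1)
        (fun q => if q.2 then a x else 1)
        (fun q => Fin.cons (α := fun _ => Matrix (Fin n) (Fin m) ℂ) C (fun c : Fin j => V c (q.1.1 c)))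
        (by
          rintro ⟨q, bb⟩
          have := hr x
          cases bb
          · simp; omega
          · simp; omega)
      have hN1 : ∀ ς ∈ F, GoodT (a x) (fun c : Fin j => V c (ς c)) → 
          GoodT (a x) (Fin.snoc (α := fun _ => Matrix (Fin n) (Fin m) ℂ) (fun c : Fin j => V c (ς c)) N) := by
        intro ς hς h
        refine h.snoc (fun c w hw => ?_)
        refine hN (⟨ς, hς⟩, true) (Fin.cons 0 c) w ?_
        rw [Fin.sum_univ_succ]
        simpa using hw
      have hN2 : ∀ ς ∈ F, GoodT 1 (Fin.cons (α := fun _ => Matrix (Fin n) (Fin m) ℂ) C (fun c : Fin j => V c (ς c))) → 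
          GoodT 1 (Fin.cons (α := fun _ => Matrix (Fin n) (Fin m) ℂ) C
            (Fin.snoc (α := fun _ => Matrix (Fin n) (Fin m) ℂ) (fun c : Fin j => V c (ς c)) N)) := by
        intro ς hς h
        have h2 := h.snoc (N := N) (fun c w hw => by
          refine hN (⟨ς, hς⟩, false) c w ?_
          simpa using hw)
        rw [Fin.cons_snoc_eq_snoc_cons]
        exact h2
      have ho1 : ∀ᶠ z in nhds x, ∀ c : Fin j, ∀ y ∈ s c, z ∈ D c y → x ∈ D c y := by
        rw [Filter.eventually_all]
        intro c
        rw [Filter.eventually_all_finset]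
        intro y _
        by_cases hx : x ∈ D c y
        · exact Filter.Eventually.of_forall fun _ _ => hx
        · filter_upwards [(hcl c c.2 y).isOpen_compl.mem_nhds hx] with z hz h
          exact absurd h hz
      have ho2 : ∀ᶠ z in nhds x, ∀ ς ∈ F, GoodT (a x) (fun c : Fin j => V c (ς c)) → 
          GoodT (a z) (Fin.snoc (α := fun _ => Matrix (Fin n) (Fin m) ℂ) (fun c : Fin j => V c (ς c)) N) := by
        rw [Filter.eventually_all_finset]
        intro ς hς
        by_cases h : GoodT (a x) (fun c : Fin j => V c (ς c))
        · filter_upwards [(isOpen_goodT ha _).mem_nhds (hN1 ς hς h)] with z hz _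
          exact hz
        · exact Filter.Eventually.of_forall fun _ h' => absurd h' h
      obtain ⟨B, hB, hBc, hBs⟩ := exists_mem_nhds_isClosed_subset (ho1.and ho2)
      refine ⟨N, B, hBc, hB, ?_⟩
      intro z hz ς hς
      obtain ⟨h1, h2⟩ := hBs hz
      have hςF : ς ∈ F := Fintype.mem_piFinset.mpr fun c => (hς c).1
      have hgx := hg x ς (fun c => ⟨(hς c).1, h1 c _ (hς c).1 (hς c).2⟩)
      exact ⟨h2 ς hςF hgx.1, hN2 ς hςF hgx.2⟩
    choose N B hBc hBn hB using key
    obtain ⟨t, ht⟩ := CompactSpace.elim_nhds_subcover (fun x => interior (B x))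
      (fun x => interior_mem_nhds.mpr (hBn x))
    refine ⟨Function.update s j t, Function.update D j B, Function.update V j N, ?_, ?_, ?_⟩
    · intro c hc y
      rcases eq_or_ne c j with rfl | h
      · simpa using hBc y
      · simpa [h] using hcl c (by omega) y
    · intro c hc x
      rcases eq_or_ne c j with rfl | h
      · have : x ∈ ⋃ x ∈ t, interior (B x) := by rw [ht]; trivial
        simpa using this
      · simpa [h] using hcov c (by omega) x
    · intro x ς hς
      have e : (fun c : Fin (j+1) => Function.update V j N c (ς c)) =
          Fin.snoc (α := fun _ => Matrix (Fin n) (Fin m) ℂ) (fun c : Fin j => V c (ς c.castSucc)) (N (ς (Fin.last j))) := by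
        funext c
        refine Fin.lastCases ?_ (fun c => ?_) c
        · simp
        · simp [Function.update_of_ne c.2.ne]
      rw [e]
      have hl := hς (Fin.last j)
      simp only [Fin.val_last, Function.update_self] at hl
      refine hB _ x hl.2 (fun c => ς c.castSucc) (fun c => ?_)
      have := hς c.castSucc
      simpa [Function.update_of_ne c.2.ne] using this

universe uu

lemma cover_fun {X : Type uu} [MetricSpace X] [CompactSpace X] {d : ℕ} (hdim : HasCovDimLE X d)
    (𝒰 : Set (Set X)) (hU : ∀ U ∈ 𝒰, IsOpen U) (hc : ⋃₀ 𝒰 = Set.univ) :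
    ∃ (ι : Type uu) (_ : Fintype ι) (f : ι → X → ℝ), (∀ i, Continuous (f i)) ∧ (∀ i x, 0 ≤ f i x) ∧
      (∀ x, ∃ i, f i x ≠ 0) ∧ (∀ i, ∃ U ∈ 𝒰, ∀ x, f i x ≠ 0 → x ∈ U) ∧
      ∀ x, ∀ S : Finset ι, (∀ i ∈ S, f i x ≠ 0) → S.card ≤ d + 1 := by
  classical
  obtain ⟨𝒱, hVo, hVc, hVr, hVd⟩ := hdim 𝒰 hU hc
  obtain ⟨t, ht⟩ := isCompact_univ.elim_finite_subcover (fun V : 𝒱 => (V : Set X)) (fun V => hVo _ V.2)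
    (by rw [← hVc, Set.sUnion_eq_iUnion])
  obtain ⟨f, hf⟩ := PartitionOfUnity.exists_isSubordinate (isClosed_univ (X := X))
    (fun V : t => ((V : 𝒱) : Set X)) (fun V => hVo _ V.1.2) (by
      intro x hx
      have := ht hx
      simp only [Set.mem_iUnion] at this ⊢
      obtain ⟨i, hi, hxi⟩ := this
      exact ⟨⟨i, hi⟩, hxi⟩)
  have hmem : ∀ (i : t) x, f i x ≠ 0 → x ∈ ((i : 𝒱) : Set X) := 
    fun i x h => hf i (subset_tsupport _ h)
  refine ⟨t, inferInstance, fun i x => f i x, fun i => (f i).continuous, fun i x => f.nonneg i x, ?_, ?_, ?_⟩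
  · intro x
    obtain ⟨i, hi⟩ := f.exists_pos (Set.mem_univ x)
    exact ⟨i, hi.ne'⟩
  · intro i
    obtain ⟨U, hU, hVU⟩ := hVr _ i.1.2
    exact ⟨U, hU, fun x hx => hVU (hmem i x hx)⟩
  · intro x S hS
    obtain ⟨hfin, hcard⟩ := hVd x
    refine le_trans ?_ hcard
    have hinj : Function.Injective (fun i : t => ((i : 𝒱) : Set X)) :=
      Subtype.val_injective.comp Subtype.val_injective
    rw [← Finset.card_image_of_injective S hinj, ← Set.ncard_coe_finset]
    apply Set.ncard_le_ncard _ hfin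
    intro V hV
    simp only [Finset.coe_image, Set.mem_image] at hV
    obtain ⟨i, hi, rfl⟩ := hV
    exact ⟨i.1.2, hmem i x (hS i hi)⟩

/-- barycentric functions -/
noncomputable def psi {X ι : Type*} [Fintype ι] [DecidableEq ι] (f : ι → X → ℝ) (S : Finset ι) (x : X) : ℝ :=
  (∏ i ∈ S, f i x) * ∏ i ∈ S, ∏ l ∈ Sᶜ, max 0 (f i x - f l x)

lemma psi_continuous {X ι : Type*} [TopologicalSpace X] [Fintype ι] [DecidableEq ι] {f : ι → X → ℝ} (hf : ∀ i, Continuous (f i)) (S : Finset ι) :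
    Continuous (psi f S) := by
  unfold psi
  fun_prop

lemma psi_ne {X ι : Type*} [Fintype ι] [DecidableEq ι] {f : ι → X → ℝ} {S : Finset ι} {x : X} 
    (h : psi f S x ≠ 0) : (∀ i ∈ S, f i x ≠ 0) ∧ ∀ i ∈ S, ∀ l ∉ S, f l x < f i x := by
  unfold psi at h
  have h1 := left_ne_zero_of_mul h
  have h2 := right_ne_zero_of_mul h
  rw [Finset.prod_ne_zero_iff] at h1 h2
  refine ⟨h1, fun i hi l hl => ?_⟩
  have h3 := h2 i hi
  rw [Finset.prod_ne_zero_iff] at h3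
  have := h3 l (by simpa using hl)
  by_contra hle
  exact this (max_eq_left (by linarith))

lemma psi_unique {X ι : Type*} [Fintype ι] [DecidableEq ι] {f : ι → X → ℝ} {S T : Finset ι} {x : X} 
    (hS : psi f S x ≠ 0) (hT : psi f T x ≠ 0) (hc : S.card = T.card) : S = T := by
  by_contra hne
  have h1 : ¬ S ⊆ T := fun h => hne (Finset.eq_of_subset_of_card_le h hc.ge)
  have h2 : ¬ T ⊆ S := fun h => hne (Finset.eq_of_subset_of_card_le h hc.le).symm
  obtain ⟨i, hi, hi'⟩ := Finset.not_subset.mp h1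
  obtain ⟨l, hl, hl'⟩ := Finset.not_subset.mp h2
  exact absurd ((psi_ne hS).2 i hi l hl') (not_lt.mpr ((psi_ne hT).2 l hl i hi').le)

lemma psi_exists {X ι : Type*} [Fintype ι] [DecidableEq ι] {f : ι → X → ℝ} {x : X} (h0 : ∀ i x, 0 ≤ f i x)
    (h : ∃ i, f i x ≠ 0) : ∃ S : Finset ι, S.Nonempty ∧ psi f S x ≠ 0 := by
  obtain ⟨i, hi⟩ := h
  have : Nonempty ι := ⟨i⟩
  obtain ⟨q, hq⟩ := Finite.exists_max (fun i => f i x)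
  have hqp : 0 < f q x := lt_of_lt_of_le (lt_of_le_of_ne (h0 i x) (Ne.symm hi)) (hq i)
  refine ⟨Finset.univ.filter (fun l => f l x = f q x), ⟨q, by simp⟩, ?_⟩
  unfold psi
  refine mul_ne_zero ?_ ?_
  · rw [Finset.prod_ne_zero_iff]
    intro l hl
    rw [(Finset.mem_filter.mp hl).2]
    exact hqp.ne'
  · rw [Finset.prod_ne_zero_iff]
    intro l hl
    rw [Finset.prod_ne_zero_iff]
    intro r hr
    have e1 := (Finset.mem_filter.mp hl).2
    have e2 : f r x ≠ f q x := by simpa using hr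
    have e3 : f r x < f q x := lt_of_le_of_ne (hq r) e2
    rw [e1, max_eq_right (by linarith)]
    linarith

lemma exists_section {X : Type uu} [MetricSpace X] [CompactSpace X] {n m d : ℕ} (hdim : HasCovDimLE X d) (hm : 0 < m)
    (a : X → Matrix (Fin n) (Fin n) ℂ) (ha : Continuous a) (hr : ∀ x, m + d ≤ (a x).rank)
    (hn : m + d ≤ n) (C : Matrix (Fin n) (Fin m) ℂ) (hC : MInj C) :
    ∃ V : X → Matrix (Fin n) (Fin m) ℂ, Continuous V ∧ (∀ x, MInj (a x * V x)) ∧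
      ∀ x, ∀ t : ℝ, MInj ((1 - t) • V x + t • C) := by
  classical
  obtain ⟨s, D, V, hcl, hcov, hg⟩ := layers hm a ha hr hn C hC (d + 1) le_rfl
  have hcov' : ∀ x, ∃ τ : Fin (d + 1) → X, ∀ c : Fin (d + 1), τ c ∈ s c ∧ x ∈ interior (D c (τ c)) := by
    intro x
    choose τ h1 h2 using fun c : Fin (d + 1) => hcov c c.2 x
    exact ⟨τ, fun c => ⟨h1 c, h2 c⟩⟩
  choose τ hτ using hcov'
  obtain ⟨ι, _, f, hfc, hf0, hfe, hfU, hfd⟩ := cover_fun hdim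
    (Set.range (fun x => ⋂ c : Fin (d + 1), interior (D c (τ x c))))
    (by
      rintro U ⟨x, rfl⟩
      exact isOpen_iInter_of_finite fun c => isOpen_interior)
    (by
      rw [Set.eq_univ_iff_forall]
      intro x
      exact ⟨_, ⟨x, rfl⟩, Set.mem_iInter.mpr fun c => (hτ x c).2⟩)
  have hfU' : ∀ i, ∃ y, ∀ x, f i x ≠ 0 → ∀ c : Fin (d + 1), x ∈ D c (τ y c) := by
    intro i
    obtain ⟨U, ⟨y, rfl⟩, h⟩ := hfU i
    exact ⟨y, fun x hx c => interior_subset (Set.mem_iInter.mp (h x hx) c)⟩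
  choose y hy using hfU'
  rcases isEmpty_or_nonempty X with hX | ⟨⟨x₀⟩⟩
  · exact ⟨fun _ => 0, continuous_const, fun x => (hX.false x).elim, fun x => (hX.false x).elim⟩
  obtain ⟨i₀, _⟩ := hfe x₀
  let pick : Finset ι → ι := fun S => if h : S.Nonempty then h.choose else i₀
  have hpick : ∀ S : Finset ι, S.Nonempty → pick S ∈ S := by
    intro S h
    simp only [pick, h, dif_pos]
    exact h.choose_spec
  let A : Fin (d + 1) → Finset (Finset ι) := fun c => Finset.powersetCard (c + 1) Finset.univ
  let G : X → Matrix (Fin n) (Fin m) ℂ := fun x =>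
    ∑ c : Fin (d + 1), ∑ S ∈ A c, psi f S x • V c (τ (y (pick S)) c)
  have hG : Continuous G := by
    refine continuous_finsetSum _ fun c _ => continuous_finsetSum _ fun S _ => ?_
    exact (psi_continuous hfc S).smul continuous_const
  have hrep : ∀ x, ∃ ς : Fin (d + 1) → X, ∃ lam : Fin (d + 1) → ℝ, 
      (∀ c : Fin (d + 1), ς c ∈ s c ∧ x ∈ D c (ς c)) ∧ lam ≠ 0 ∧ G x = ∑ c : Fin (d + 1), lam c • V c (ς c) := by
    intro x
    have h1 : ∀ c : Fin (d + 1), ∃ z : X, ∃ l : ℝ, (z ∈ s c ∧ x ∈ D c z) ∧ 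
        (∀ S ∈ A c, psi f S x ≠ 0 → l ≠ 0) ∧
        ∑ S ∈ A c, psi f S x • V c (τ (y (pick S)) c) = l • V c z := by
      intro c
      by_cases h : ∃ S ∈ A c, psi f S x ≠ 0
      · obtain ⟨S, hS, hSx⟩ := h
        have hcard := (Finset.mem_powersetCard.mp hS).2
        have hne : S.Nonempty := Finset.card_pos.mp (by omega)
        refine ⟨τ (y (pick S)) c, psi f S x, ⟨(hτ _ c).1, ?_⟩, fun _ _ _ => hSx, ?_⟩
        · exact hy _ x ((psi_ne hSx).1 _ (hpick S hne)) c
        · rw [Finset.sum_eq_single_of_mem S hS]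
          intro T hT hTS
          by_cases hTx : psi f T x = 0
          · rw [hTx, zero_smul]
          · exact absurd (psi_unique hTx hSx ((Finset.mem_powersetCard.mp hT).2.trans hcard.symm)) hTS
      · push Not at h
        refine ⟨τ x c, 0, ⟨(hτ x c).1, interior_subset (hτ x c).2⟩, fun S hS hSx => absurd (h S hS) hSx, ?_⟩
        rw [zero_smul]
        exact Finset.sum_eq_zero fun S hS => by rw [h S hS, zero_smul]
    choose ς lam h2 h3 h4 using h1
    refine ⟨ς, lam, h2, ?_, Finset.sum_congr rfl fun c _ => h4 c⟩
    obtain ⟨S, hSn, hS⟩ := psi_exists hf0 (hfe x)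
    have hcd := hfd x S (psi_ne hS).1
    have hpos := Finset.card_pos.mpr hSn
    intro h0
    refine h3 ⟨S.card - 1, by omega⟩ S ?_ hS (congrFun h0 _)
    simp only [A, Finset.mem_powersetCard, Finset.subset_univ, true_and]
    omega
  refine ⟨G, hG, fun x => ?_, fun x t => ?_⟩
  · obtain ⟨ς, lam, h1, h2, h3⟩ := hrep x
    rw [h3]
    exact (hg x ς h1).1 lam h2
  · obtain ⟨ς, lam, h1, h2, h3⟩ := hrep x
    have := (hg x ς h1).2 (Fin.cons t ((1 - t) • lam)) (by
      intro h0
      have e0 : t = 0 := by simpa using congrFun h0 0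
      apply h2
      funext c
      simpa [e0] using congrFun h0 c.succ)
    rw [Matrix.one_mul, Fin.sum_univ_succ] at this
    simp only [Fin.cons_zero, Fin.cons_succ, Pi.smul_apply, smul_eq_mul, mul_smul] at this
    rw [h3, add_comm, Finset.smul_sum]
    exact this

lemma cont_minv {Y : Type*} [TopologicalSpace Y] {m : ℕ} {F : Y → Matrix (Fin m) (Fin m) ℂ}
    (hF : Continuous F) (hu : ∀ y, IsUnit (F y).det) : Continuous fun y => (F y)⁻¹ := by
  simp only [Matrix.inv_def, Ring.inverse_eq_inv']
  exact (hF.matrix_det.inv₀ fun y => (hu y).ne_zero).smul hF.matrix_adjugate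

lemma posDef_compress {n m : ℕ} {b : Matrix (Fin n) (Fin n) ℂ} (hb : b.PosSemidef)
    {V : Matrix (Fin n) (Fin m) ℂ} (hV : MInj (b * V)) : (V.conjTranspose * b * V).PosDef := by
  have h1 := hb.conjTranspose_mul_mul_same V
  refine Matrix.PosDef.of_dotProduct_mulVec_pos h1.1 fun w hw => ?_
  refine lt_of_le_of_ne (h1.dotProduct_mulVec_nonneg w) fun h0 => hw ?_
  have h2 := (h1.dotProduct_mulVec_zero_iff w).mp h0.symm
  apply hV
  rw [← Matrix.mulVec_mulVec, ← hb.dotProduct_mulVec_zero_iff, h0, Matrix.star_mulVec, ← Matrix.dotProduct_mulVec,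
    Matrix.mulVec_mulVec, Matrix.mulVec_mulVec, Matrix.mul_assoc]

lemma posDef_gram {n m : ℕ} {V : Matrix (Fin n) (Fin m) ℂ} (hV : MInj V) : (V.conjTranspose * V).PosDef := by
  have := posDef_compress (b := 1) Matrix.PosSemidef.one (V := V) (by simpa using hV)
  simpa using this

lemma posDef_unit {m : ℕ} {G : Matrix (Fin m) (Fin m) ℂ} (h : G.PosDef) : IsUnit G.det :=
  (Matrix.isUnit_iff_isUnit_det _).mp h.isUnit

lemma rank_sum {n m : ℕ} {S : Matrix (Fin n) (Fin n) ℂ} {V Y : Matrix (Fin n) (Fin m) ℂ}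
    {K : Matrix (Fin m) (Fin m) ℂ} (hK : K.PosDef) (hS : S.PosSemidef) (hSV : S * V = 0)
    (hu : IsUnit (Y.conjTranspose * V).det) :
    (Y * K * Y.conjTranspose + S).rank = m + S.rank := by
  set H := Y * K * Y.conjTranspose + S with hH
  have hP : (Y * K * Y.conjTranspose).PosSemidef := hK.posSemidef.mul_mul_conjTranspose_same Y
  have hker : ∀ v, H.mulVec v = 0 ↔ S.mulVec v = 0 ∧ Y.conjTranspose.mulVec v = 0 := by
    intro v
    constructor
    · intro h
      have h0 : star v ⬝ᵥ (Y * K * Y.conjTranspose).mulVec v + star v ⬝ᵥ S.mulVec v = 0 := by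
        rw [← dotProduct_add, ← Matrix.add_mulVec, ← hH, h, dotProduct_zero]
      have n1 := hP.dotProduct_mulVec_nonneg v
      have n2 := hS.dotProduct_mulVec_nonneg v
      obtain ⟨e1, e2⟩ := (add_eq_zero_iff_of_nonneg n1 n2).mp h0
      refine ⟨(hS.dotProduct_mulVec_zero_iff v).mp e2, ?_⟩
      by_contra hne
      have := hK.dotProduct_mulVec_pos hne
      rw [Matrix.star_mulVec, Matrix.conjTranspose_conjTranspose, ← Matrix.dotProduct_mulVec,
        Matrix.mulVec_mulVec, Matrix.mulVec_mulVec, e1] at this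
      exact lt_irrefl _ this
    · rintro ⟨h1, h2⟩
      rw [hH, Matrix.add_mulVec, h1, ← Matrix.mulVec_mulVec, h2, Matrix.mulVec_zero, add_zero]
  let φ : LinearMap.ker S.mulVecLin →ₗ[ℂ] (Fin m → ℂ) := Y.conjTranspose.mulVecLin.domRestrict _
  have hsurj : LinearMap.range φ = ⊤ := by
    rw [LinearMap.range_eq_top]
    intro y
    refine ⟨⟨V.mulVec ((Y.conjTranspose * V)⁻¹.mulVec y), ?_⟩, ?_⟩
    · rw [LinearMap.mem_ker, Matrix.mulVecLin_apply, Matrix.mulVec_mulVec, hSV, Matrix.zero_mulVec]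
    · change Y.conjTranspose.mulVec (V.mulVec ((Y.conjTranspose * V)⁻¹.mulVec y)) = y
      rw [Matrix.mulVec_mulVec, Matrix.mulVec_mulVec, Matrix.mul_nonsing_inv _ hu, Matrix.one_mulVec]
  have hkm : (LinearMap.ker φ).map (LinearMap.ker S.mulVecLin).subtype = LinearMap.ker H.mulVecLin := by
    ext v
    simp only [Submodule.mem_map, LinearMap.mem_ker, Matrix.mulVecLin_apply, hker]
    constructor
    · rintro ⟨⟨z, hz⟩, h, rfl⟩
      exact ⟨hz, h⟩
    · rintro ⟨h1, h2⟩
      exact ⟨⟨v, h1⟩, h2, rfl⟩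
  have r1 := LinearMap.finrank_range_add_finrank_ker φ
  rw [hsurj, finrank_top, Module.finrank_fin_fun, ← Submodule.finrank_map_subtype_eq, hkm] at r1
  have r2 := LinearMap.finrank_range_add_finrank_ker S.mulVecLin
  have r3 := LinearMap.finrank_range_add_finrank_ker H.mulVecLin
  rw [Module.finrank_fin_fun] at r2 r3
  unfold Matrix.rank
  omega

section polar
open scoped Matrix.Norms.L2Operator

lemma exists_sqrt_gen {A : Type*} [CStarAlgebra A] (Z : A) :
    ∃ r : A, star r = r ∧ r * r = star Z * Z ∧ ∀ q : A, Commute (star Z * Z) q → Commute r q := by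
  have hsa : IsSelfAdjoint (star Z * Z) := IsSelfAdjoint.star_mul_self Z
  have hr : IsSelfAdjoint (cfc Real.sqrt (star Z * Z)) := cfc_predicate _ _
  refine ⟨cfc Real.sqrt (star Z * Z), hr, ?_, fun q h => h.cfc_real _⟩
  rw [← cfc_mul Real.sqrt Real.sqrt (star Z * Z)]
  conv_rhs => rw [← cfc_id ℝ (star Z * Z)]
  apply cfc_congr
  intro x hx
  exact Real.mul_self_sqrt (spectrum_star_mul_self_nonneg x hx)

lemma exists_sqrt {X : Type*} [TopologicalSpace X] [CompactSpace X] {n : ℕ}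
    (Z : C(X, Matrix (Fin n) (Fin n) ℂ)) :
    ∃ r : C(X, Matrix (Fin n) (Fin n) ℂ), star r = r ∧ r * r = star Z * Z ∧
      ∀ q : C(X, Matrix (Fin n) (Fin n) ℂ), Commute (star Z * Z) q → Commute r q :=
  exists_sqrt_gen Z

lemma step_bound {X : Type*} [TopologicalSpace X] [CompactSpace X] {n : ℕ}
    (E : ℝ × X → Matrix (Fin n) (Fin n) ℂ) (hE : Continuous E) :
    ∃ N : ℕ, (0 : ℝ) < N ∧ ∀ t ∈ Set.Icc (0 : ℝ) 1, ∀ x, IsUnit (1 - (1 / N : ℝ) • E (t, x)) := by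
  obtain ⟨K, hK⟩ := (isCompact_Icc.prod isCompact_univ :
    IsCompact (Set.Icc (0:ℝ) 1 ×ˢ (Set.univ : Set X))).exists_bound_of_continuousOn hE.continuousOn
  obtain ⟨N, hN⟩ := exists_nat_gt (max K 0)
  have hN0 : (0 : ℝ) < N := lt_of_le_of_lt (le_max_right _ _) hN
  refine ⟨N, hN0, fun t ht x => ?_⟩
  apply isUnit_one_sub_of_norm_lt_one
  have hb : ‖E (t, x)‖ < N := lt_of_le_of_lt ((hK (t, x) ⟨ht, trivial⟩).trans (le_max_left _ _)) hN
  have hc : ‖(1 / N : ℝ)‖ = (N : ℝ)⁻¹ := by rw [Real.norm_of_nonneg (by positivity), one_div]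
  calc ‖(1 / N : ℝ) • E (t, x)‖ ≤ ‖(1 / N : ℝ)‖ * ‖E (t, x)‖ := norm_smul_le _ _
    _ = (N : ℝ)⁻¹ * ‖E (t, x)‖ := by rw [hc]
    _ < 1 := by rw [inv_mul_lt_one₀ hN0]; exact hb

end polar

lemma step_lemma {X : Type*} [TopologicalSpace X] [CompactSpace X] {n m : ℕ}
    {V : X → Matrix (Fin n) (Fin m) ℂ} (hV : Continuous V) (C : Matrix (Fin n) (Fin m) ℂ)
    (h : ∀ x, ∀ t : ℝ, MInj ((1 - t) • V x + t • C)) :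
    ∃ Z : X → Matrix (Fin n) (Fin n) ℂ, Continuous Z ∧ (∀ x, IsUnit (Z x)) ∧ ∀ x, Z x * C = V x := by
  let B : ℝ → X → Matrix (Fin n) (Fin m) ℂ := fun t x => (1 - t) • V x + t • C
  let E : ℝ → X → Matrix (Fin n) (Fin n) ℂ := fun t x =>
    (C - V x) * ((B t x).conjTranspose * B t x)⁻¹ * (B t x).conjTranspose
  have hBc : Continuous fun p : ℝ × X => B p.1 p.2 := by
    have h1 : Continuous fun p : ℝ × X => V p.2 := hV.comp continuous_snd
    have h2 : Continuous fun p : ℝ × X => p.1 := continuous_fst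
    exact ((continuous_const.sub h2).smul h1).add (h2.smul continuous_const)
  have hEc : Continuous fun p : ℝ × X => E p.1 p.2 := by
    have h1 : Continuous fun p : ℝ × X => V p.2 := hV.comp continuous_snd
    have h3 : Continuous fun p : ℝ × X => ((B p.1 p.2).conjTranspose * B p.1 p.2)⁻¹ :=
      cont_minv (hBc.matrix_conjTranspose.matrix_mul hBc) fun p => posDef_unit (posDef_gram (h p.2 p.1))
    exact ((continuous_const.sub h1).matrix_mul h3).matrix_mul hBc.matrix_conjTranspose
  have hEB : ∀ t x, E t x * B t x = C - V x := by
    intro t x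
    have hu := posDef_unit (posDef_gram (h x t))
    simp only [E]
    rw [Matrix.mul_assoc, Matrix.mul_assoc, Matrix.nonsing_inv_mul _ hu, Matrix.mul_one]
  obtain ⟨N, hN0, hN⟩ := step_bound (fun p : ℝ × X => E p.1 p.2) hEc
  clear_value E
  have main : ∀ i : ℕ, i ≤ N → ∃ Z : X → Matrix (Fin n) (Fin n) ℂ, Continuous Z ∧ (∀ x, IsUnit (Z x)) ∧
      ∀ x, Z x * C = B (1 - i / N) x := by
    intro i
    induction i with
    | zero =>
      intro _
      refine ⟨fun _ => 1, continuous_const, fun _ => isUnit_one, fun x => ?_⟩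
      simp [B]
    | succ i ih =>
      intro hi
      obtain ⟨Z, hZc, hZu, hZ⟩ := ih (by omega)
      have ht : (1 - (i : ℝ) / N) ∈ Set.Icc (0 : ℝ) 1 := by
        constructor
        · rw [sub_nonneg, div_le_one hN0]; exact_mod_cast (by omega)
        · rw [sub_le_self_iff]; positivity
      set t := 1 - (i : ℝ) / N with htd
      refine ⟨fun x => (1 - (1 / N : ℝ) • E t x) * Z x, ?_, ?_, ?_⟩
      · have hEt : Continuous fun x => E t x := hEc.comp (Continuous.prodMk_right t)
        have h5 : Continuous fun x => (1 / N : ℝ) • E t x := hEt.const_smul (1 / N : ℝ)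
        have h6 : Continuous fun x => (1 : Matrix (Fin n) (Fin n) ℂ) - (1 / N : ℝ) • E t x :=
          Continuous.sub continuous_const h5
        exact h6.matrix_mul hZc
      · intro x
        refine IsUnit.mul ?_ (hZu x)
        exact hN t ht x
      · intro x
        rw [Matrix.mul_assoc, hZ, Matrix.sub_mul, Matrix.smul_mul, hEB, Matrix.one_mul]
        have e : 1 - ((i + 1 : ℕ) : ℝ) / N = t - 1 / N := by
          rw [htd]; push_cast; ring
        rw [e]
        simp only [B]
        module
  obtain ⟨Z, h1, h2, h3⟩ := main N le_rfl
  refine ⟨Z, h1, h2, fun x => ?_⟩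
  rw [h3, div_self hN0.ne']
  simp [B]

lemma polar_conj {X : Type*} [TopologicalSpace X] [CompactSpace X] {n : ℕ}
    {Z p : X → Matrix (Fin n) (Fin n) ℂ} {q : Matrix (Fin n) (Fin n) ℂ} (hZ : Continuous Z)
    (hZu : ∀ x, IsUnit (Z x)) (hp : ∀ x, (p x).IsHermitian) (hq : q.IsHermitian)
    (hpq : ∀ x, p x * Z x = Z x * q) :
    ∃ u : C(X, Matrix (Fin n) (Fin n) ℂ), (∀ x, u x ∈ Matrix.unitaryGroup (Fin n) ℂ) ∧
      ∀ x, u x * p x * star (u x) = q := by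
  obtain ⟨r, hr1, hr2, hr3⟩ := exists_sqrt (⟨Z, hZ⟩ : C(X, Matrix (Fin n) (Fin n) ℂ))
  have hrs : ∀ x, star (r x) = r x := fun x => congrArg (fun g : C(X, Matrix (Fin n) (Fin n) ℂ) => g x) hr1
  have hrr : ∀ x, r x * r x = star (Z x) * Z x := fun x => congrArg (fun g : C(X, Matrix (Fin n) (Fin n) ℂ) => g x) hr2
  have hqz : ∀ x, star (Z x) * p x = q * star (Z x) := by
    intro x
    have := congrArg star (hpq x)
    rw [star_mul, star_mul] at this
    rwa [show star (p x) = p x from hp x, show star q = q from hq] at this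
  have hrq : ∀ x, r x * q = q * r x := by
    intro x
    have : Commute r (ContinuousMap.const X q) := by
      apply hr3
      ext1 y
      change star (Z y) * Z y * q = q * (star (Z y) * Z y)
      rw [mul_assoc, ← hpq, ← mul_assoc, hqz, mul_assoc]
    exact congrArg (fun g : C(X, Matrix (Fin n) (Fin n) ℂ) => g x) this.eq
  have hru : ∀ x, IsUnit (r x).det := by
    intro x
    have h1 : IsUnit (r x * r x) := by
      rw [hrr]; exact (hZu x).star.mul (hZu x)
    rw [Matrix.isUnit_iff_isUnit_det, Matrix.det_mul] at h1
    exact isUnit_of_mul_isUnit_left h1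
  have hri : Continuous fun x => (r x)⁻¹ := cont_minv r.continuous hru
  have hris : ∀ x, star ((r x)⁻¹) = (r x)⁻¹ := by
    intro x
    rw [Matrix.star_eq_conjTranspose, Matrix.conjTranspose_nonsing_inv, ← Matrix.star_eq_conjTranspose, hrs]
  have hriq : ∀ x, (r x)⁻¹ * q = q * (r x)⁻¹ := by
    intro x
    calc (r x)⁻¹ * q = (r x)⁻¹ * (q * r x) * (r x)⁻¹ := by
          rw [mul_assoc, mul_assoc, Matrix.mul_nonsing_inv _ (hru x), mul_one]
      _ = q * (r x)⁻¹ := by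
          rw [← hrq, ← mul_assoc, Matrix.nonsing_inv_mul _ (hru x), one_mul]
  have hu1 : ∀ x, (r x)⁻¹ * star (Z x) * (Z x * (r x)⁻¹) = 1 := by
    intro x
    calc (r x)⁻¹ * star (Z x) * (Z x * (r x)⁻¹) = (r x)⁻¹ * (star (Z x) * Z x) * (r x)⁻¹ := by
          simp only [mul_assoc]
      _ = 1 := by
          rw [← hrr, ← mul_assoc, Matrix.nonsing_inv_mul _ (hru x), one_mul, Matrix.mul_nonsing_inv _ (hru x)]
  refine ⟨⟨fun x => (r x)⁻¹ * star (Z x), hri.matrix_mul hZ.star⟩, fun x => ?_, fun x => ?_⟩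
  · rw [Matrix.mem_unitaryGroup_iff]
    change (r x)⁻¹ * star (Z x) * star ((r x)⁻¹ * star (Z x)) = 1
    rw [star_mul, star_star, hris, hu1]
  · change (r x)⁻¹ * star (Z x) * p x * star ((r x)⁻¹ * star (Z x)) = q
    rw [star_mul, star_star, hris, mul_assoc _ _ (p x), hqz, ← mul_assoc (r x)⁻¹ q, hriq, mul_assoc q, mul_assoc q, hu1, mul_one]

lemma posDef_conv {m : ℕ} {A B : Matrix (Fin m) (Fin m) ℂ} (hA : A.PosDef) (hB : B.PosDef) {t : ℝ}
    (h0 : 0 ≤ t) (h1 : t ≤ 1) : ((1 - t) • A + t • B).PosDef := by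
  rcases h0.eq_or_lt with rfl | h0
  · simpa using hA
  · exact Matrix.PosDef.posSemidef_add (hA.posSemidef.smul (sub_nonneg.mpr h1)) (hB.smul h0)

/-- The Schur complement. -/
noncomputable def schur {n m : ℕ} (b : Matrix (Fin n) (Fin n) ℂ) (V : Matrix (Fin n) (Fin m) ℂ) : Matrix (Fin n) (Fin n) ℂ :=
  b - b * V * (V.conjTranspose * b * V)⁻¹ * (V.conjTranspose * b)

noncomputable def yy {n m : ℕ} (b : Matrix (Fin n) (Fin n) ℂ) (V : Matrix (Fin n) (Fin m) ℂ) (t : ℝ) : Matrix (Fin n) (Fin m) ℂ :=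
  (1 - t) • (b * V) + t • V

noncomputable def kk {n m : ℕ} (b : Matrix (Fin n) (Fin n) ℂ) (V : Matrix (Fin n) (Fin m) ℂ) (t : ℝ) : Matrix (Fin m) (Fin m) ℂ :=
  (1 - t) • (V.conjTranspose * b * V)⁻¹ + t • (V.conjTranspose * V)⁻¹

noncomputable def hh {n m : ℕ} (b : Matrix (Fin n) (Fin n) ℂ) (V : Matrix (Fin n) (Fin m) ℂ) (t : ℝ) : Matrix (Fin n) (Fin n) ℂ :=
  yy b V t * kk b V t * (yy b V t).conjTranspose + schur b V

noncomputable def prj {n m : ℕ} (V : Matrix (Fin n) (Fin m) ℂ) : Matrix (Fin n) (Fin n) ℂ :=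
  V * (V.conjTranspose * V)⁻¹ * V.conjTranspose

lemma MInj.of_mul {n m : ℕ} {b : Matrix (Fin n) (Fin n) ℂ} {V : Matrix (Fin n) (Fin m) ℂ} (hV : MInj (b * V)) : MInj V := by
  intro w hw
  apply hV
  rw [← Matrix.mulVec_mulVec, hw, Matrix.mulVec_zero]

section pointwise
variable {n m : ℕ} {b : Matrix (Fin n) (Fin n) ℂ} {V : Matrix (Fin n) (Fin m) ℂ}

lemma schur_mul (hb : b.PosSemidef) (hV : MInj (b * V)) : schur b V * V = 0 := by
  have hu := posDef_unit (posDef_compress hb hV)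
  rw [schur, Matrix.sub_mul, Matrix.mul_assoc _ (V.conjTranspose * b) V, Matrix.mul_assoc (b * V),
    Matrix.nonsing_inv_mul _ hu, Matrix.mul_one, sub_self]

lemma schur_posSemidef (hb : b.PosSemidef) (hV : MInj (b * V)) : (schur b V).PosSemidef := by
  have hG := posDef_compress hb hV
  have hu := posDef_unit hG
  have hGi : ((V.conjTranspose * b * V)⁻¹).conjTranspose = (V.conjTranspose * b * V)⁻¹ := by
    rw [Matrix.conjTranspose_nonsing_inv, hG.1.eq]
  have h1 : schur b V = (1 - V * (V.conjTranspose * b * V)⁻¹ * (V.conjTranspose * b)).conjTranspose * b *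
      (1 - V * (V.conjTranspose * b * V)⁻¹ * (V.conjTranspose * b)) := by
    have e1 : b * (1 - V * (V.conjTranspose * b * V)⁻¹ * (V.conjTranspose * b)) = schur b V := by
      rw [schur, Matrix.mul_sub, Matrix.mul_one]; simp only [Matrix.mul_assoc]
    rw [Matrix.mul_assoc, e1, Matrix.conjTranspose_sub, Matrix.conjTranspose_one, Matrix.sub_mul, Matrix.one_mul,
      Matrix.conjTranspose_mul, Matrix.conjTranspose_mul, Matrix.conjTranspose_mul, hGi,
      Matrix.conjTranspose_conjTranspose, hb.1.eq]
    have e2 : V.conjTranspose * schur b V = 0 := by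
      have e3 : V.conjTranspose * (b * V * (V.conjTranspose * b * V)⁻¹ * (V.conjTranspose * b)) =
          (V.conjTranspose * b * V) * (V.conjTranspose * b * V)⁻¹ * (V.conjTranspose * b) := by
        simp only [Matrix.mul_assoc]
      rw [schur, Matrix.mul_sub, e3, Matrix.mul_nonsing_inv _ hu, Matrix.one_mul, sub_self]
    rw [Matrix.mul_assoc, Matrix.mul_assoc, Matrix.mul_assoc, e2]
    simp
  rw [h1]
  exact hb.conjTranspose_mul_mul_same _

lemma hh_zero (hb : b.PosSemidef) : hh b V 0 = b := by
  simp [hh, yy, kk, schur, hb.1.eq]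

lemma hh_one : hh b V 1 = prj V + schur b V := by
  simp [hh, yy, kk, prj]

lemma kk_posDef (hb : b.PosSemidef) (hV : MInj (b * V)) {t : ℝ} (h0 : 0 ≤ t) (h1 : t ≤ 1) : (kk b V t).PosDef :=
  posDef_conv (posDef_compress hb hV).inv (posDef_gram hV.of_mul).inv h0 h1

lemma hh_posSemidef (hb : b.PosSemidef) (hV : MInj (b * V)) {t : ℝ} (h0 : 0 ≤ t) (h1 : t ≤ 1) : (hh b V t).PosSemidef :=
  ((kk_posDef hb hV h0 h1).posSemidef.mul_mul_conjTranspose_same _).add (schur_posSemidef hb hV)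

lemma hh_rank' (hb : b.PosSemidef) (hV : MInj (b * V)) {t : ℝ} (h0 : 0 ≤ t) (h1 : t ≤ 1) :
    (hh b V t).rank = m + (schur b V).rank := by
  refine rank_sum (V := V) (kk_posDef hb hV h0 h1) (schur_posSemidef hb hV) (schur_mul hb hV) ?_
  have : (yy b V t).conjTranspose * V = (1 - t) • (V.conjTranspose * b * V) + t • (V.conjTranspose * V) := by
    simp [yy, Matrix.add_mul, hb.1.eq]
  rw [this]
  exact posDef_unit (posDef_conv (posDef_compress hb hV) (posDef_gram hV.of_mul) h0 h1)

lemma hh_rank (hb : b.PosSemidef) (hV : MInj (b * V)) {t : ℝ} (h0 : 0 ≤ t) (h1 : t ≤ 1) :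
    (hh b V t).rank = b.rank := by
  rw [hh_rank' hb hV h0 h1, ← hh_rank' hb hV le_rfl zero_le_one, hh_zero hb]

lemma prj_herm : (prj V).IsHermitian := by
  rw [Matrix.IsHermitian, prj, Matrix.conjTranspose_mul, Matrix.conjTranspose_mul, Matrix.conjTranspose_nonsing_inv,
    Matrix.conjTranspose_mul, Matrix.conjTranspose_conjTranspose, Matrix.mul_assoc]

lemma prj_mul (hV : MInj V) : prj V * V = V := by
  rw [prj, Matrix.mul_assoc, Matrix.mul_assoc, Matrix.nonsing_inv_mul _ (posDef_unit (posDef_gram hV)), Matrix.mul_one]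

lemma prj_idem (hV : MInj V) : prj V * prj V = prj V := by
  nth_rewrite 2 [prj]
  rw [← Matrix.mul_assoc, ← Matrix.mul_assoc, prj_mul hV, prj]

lemma prj_rank (hV : MInj V) : (prj V).rank = m := by
  have := rank_sum (S := (0 : Matrix (Fin n) (Fin n) ℂ)) (V := V) (Y := V) (posDef_gram hV).inv Matrix.PosSemidef.zero
    (by simp) (posDef_unit (posDef_gram hV))
  simpa [prj] using this

lemma prj_schur (hb : b.PosSemidef) (hV : MInj (b * V)) : prj V * schur b V = 0 ∧ schur b V * prj V = 0 := by
  have h1 : schur b V * prj V = 0 := by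
    rw [prj, ← Matrix.mul_assoc, ← Matrix.mul_assoc, schur_mul hb hV]; simp
  refine ⟨?_, h1⟩
  have := congrArg Matrix.conjTranspose h1
  rwa [Matrix.conjTranspose_mul, prj_herm.eq, (schur_posSemidef hb hV).1.eq, Matrix.conjTranspose_zero] at this

lemma twist {C : Matrix (Fin n) (Fin m) ℂ} (hC : C.conjTranspose * C = 1) {Z : Matrix (Fin n) (Fin n) ℂ}
    (hZ : IsUnit Z) (hV : MInj V) (hZV : Z * C = V) :
    prj V * (prj V * Z * (C * C.conjTranspose) + (1 - prj V) * Z * (1 - C * C.conjTranspose)) =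
      (prj V * Z * (C * C.conjTranspose) + (1 - prj V) * Z * (1 - C * C.conjTranspose)) * (C * C.conjTranspose) ∧
    IsUnit (prj V * Z * (C * C.conjTranspose) + (1 - prj V) * Z * (1 - C * C.conjTranspose)) := by
  set q := C * C.conjTranspose with hq
  have hqq : q * q = q := by
    rw [hq, Matrix.mul_assoc, ← Matrix.mul_assoc _ C, hC, Matrix.one_mul]
  have hqC : q * C = C := by rw [hq, Matrix.mul_assoc, hC, Matrix.mul_one]
  have hpp := prj_idem hV
  have hpV := prj_mul hV
  have hp1 : prj V * (1 - prj V) = 0 := by rw [mul_sub, hpp, mul_one, sub_self]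
  have hq1 : (1 - q) * q = 0 := by rw [sub_mul, hqq, one_mul, sub_self]
  have hl : prj V * (prj V * Z * q + (1 - prj V) * Z * (1 - q)) = prj V * Z * q := by
    rw [mul_add, ← mul_assoc, ← mul_assoc, hpp, ← mul_assoc, ← mul_assoc, hp1, zero_mul, zero_mul, add_zero]
  have hr : (prj V * Z * q + (1 - prj V) * Z * (1 - q)) * q = prj V * Z * q := by
    rw [add_mul, mul_assoc _ q q, hqq, mul_assoc _ (1 - q) q, hq1, mul_zero, add_zero]
  refine ⟨hl.trans hr.symm, ?_⟩
  have hZinj : ∀ v, Z.mulVec v = 0 → v = 0 := by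
    intro v hv
    exact Matrix.mulVec_injective_iff_isUnit.mpr hZ (by rw [hv, Matrix.mulVec_zero])
  rw [← Matrix.mulVec_injective_iff_isUnit, ← Matrix.coe_mulVecLin, injective_iff_map_eq_zero]
  intro v hv
  rw [Matrix.mulVecLin_apply] at hv
  have e1 : (prj V * Z * q).mulVec v = 0 := by
    rw [← hl, ← Matrix.mulVec_mulVec, hv, Matrix.mulVec_zero]
  have e2 : prj V * Z * q = Z * q := by
    rw [hq, Matrix.mul_assoc, ← Matrix.mul_assoc Z, hZV, ← Matrix.mul_assoc, hpV]
  rw [e2, ← Matrix.mulVec_mulVec] at e1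
  have e3 := hZinj _ e1
  rw [Matrix.add_mulVec, e2, ← Matrix.mulVec_mulVec, e3, Matrix.mulVec_zero, zero_add, ← Matrix.mulVec_mulVec,
    Matrix.sub_mulVec 1 q, e3, sub_zero, Matrix.one_mulVec, ← Matrix.mulVec_mulVec, Matrix.sub_mulVec, Matrix.one_mulVec,
    sub_eq_zero] at hv
  have e4 : v = C.mulVec (((V.conjTranspose * V)⁻¹ * V.conjTranspose).mulVec (Z.mulVec v)) := by
    rw [← sub_eq_zero]
    apply hZinj
    rw [Matrix.mulVec_sub, Matrix.mulVec_mulVec _ Z C, hZV, Matrix.mulVec_mulVec _ V, ← Matrix.mul_assoc, sub_eq_zero]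
    exact hv
  rw [e4, Matrix.mulVec_mulVec, hqC, ← e4] at e3
  exact e3

end pointwise

/-- If `a ∈ M_n(C(X))` is positive with `rank(a(x)) ≥ k` everywhere on a compact
metric space `X` of covering dimension `d`, then there is a homotopy `h` of positive elements
with `h 0 = a`, constant pointwise ranks, and such that `h 1` has a trivial projection direct
summand `p` of constant rank at least `k - d`. -/
theorem stmt2 {X : Type*} [MetricSpace X] [CompactSpace X] (d : ℕ) (hdim : IsCovDim X d)
    (n k : ℕ) (hn : 0 < n) (hk : 0 < k)
    (a : C(X, Matrix (Fin n) (Fin n) ℂ)) (ha : ∀ x, (a x).PosSemidef)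
    (hrank : ∀ x, k ≤ (a x).rank) :
    ∃ h : C(I, C(X, Matrix (Fin n) (Fin n) ℂ)),
      (∀ (t : I) (x : X), ((h t) x).PosSemidef) ∧
      h 0 = a ∧
      (∀ (t : I) (x : X), ((h t) x).rank = (a x).rank) ∧
      ∃ p : C(X, Matrix (Fin n) (Fin n) ℂ),
        (∀ x, (p x).IsHermitian ∧ p x * p x = p x) ∧
        (∃ m : ℕ, (∀ x, (p x).rank = m) ∧ k ≤ m + d) ∧
        (∃ u : C(X, Matrix (Fin n) (Fin n) ℂ),
          (∀ x, u x ∈ Matrix.unitaryGroup (Fin n) ℂ) ∧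
          ∃ p₀ : Matrix (Fin n) (Fin n) ℂ, ∀ x, u x * p x * star (u x) = p₀) ∧
        (∀ x, p x * (h 1) x = p x ∧ (h 1) x * p x = p x) := by
  classical
  rcases isEmpty_or_nonempty X with hX | ⟨⟨x₀⟩⟩
  · refine ⟨ContinuousMap.const _ a, fun t x => (hX.false x).elim, rfl, fun t x => (hX.false x).elim, 0,
      fun x => (hX.false x).elim, ⟨k, fun x => (hX.false x).elim, by omega⟩,
      ⟨0, fun x => (hX.false x).elim, 0, fun x => (hX.false x).elim⟩, fun x => (hX.false x).elim⟩
  rcases le_or_gt k d with hkd | hkd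
  · refine ⟨ContinuousMap.const _ a, fun t x => ha x, rfl, fun t x => rfl, 0,
      fun x => ⟨by simp, by simp⟩, ⟨0, fun x => by simp, by omega⟩,
      ⟨1, fun x => by simp, 0, fun x => by simp⟩, fun x => by simp⟩
  obtain ⟨m, rfl⟩ : ∃ m, k = m + d := ⟨k - d, by omega⟩
  have hm : 0 < m := by omega
  have hmn : m + d ≤ n := (hrank x₀).trans (by simpa using (a x₀).rank_le_card_width)
  have hmn' : m ≤ n := by omega
  let C : Matrix (Fin n) (Fin m) ℂ := (1 : Matrix (Fin n) (Fin n) ℂ).submatrix id (Fin.castLE hmn')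
  have hCC : C.conjTranspose * C = 1 := by
    simp only [C, Matrix.conjTranspose_submatrix, Matrix.conjTranspose_one]
    rw [← Matrix.submatrix_mul _ _ _ _ _ Function.bijective_id, Matrix.one_mul,
      Matrix.submatrix_one _ (Fin.castLE_injective hmn')]
  have hC : MInj C := by
    intro w hw
    have := congrArg (fun v => C.conjTranspose.mulVec v) hw
    simpa [Matrix.mulVec_mulVec, hCC] using this
  obtain ⟨V, hVc, hVa, hVt⟩ := exists_section hdim.1 hm a a.continuous hrank hmn C hC
  obtain ⟨Z, hZc, hZu, hZ⟩ := step_lemma hVc C hVt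
  have hVi : ∀ x, MInj (V x) := fun x => (hVa x).of_mul
  have hGi : Continuous fun x => ((V x).conjTranspose * V x)⁻¹ :=
    cont_minv (hVc.matrix_conjTranspose.matrix_mul hVc) fun x => posDef_unit (posDef_gram (hVi x))
  have hAi : Continuous fun x => ((V x).conjTranspose * a x * V x)⁻¹ :=
    cont_minv ((hVc.matrix_conjTranspose.matrix_mul a.continuous).matrix_mul hVc)
      fun x => posDef_unit (posDef_compress (ha x) (hVa x))
  have hpc : Continuous fun x => prj (V x) := (hVc.matrix_mul hGi).matrix_mul hVc.matrix_conjTranspose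
  have hSc : Continuous fun x => schur (a x) (V x) := by
    have h2 := ((a.continuous.matrix_mul hVc).matrix_mul hAi).matrix_mul
      (hVc.matrix_conjTranspose.matrix_mul a.continuous)
    exact a.continuous.sub h2
  have hs : Continuous fun q : I × X => (q.1 : ℝ) := continuous_subtype_val.comp continuous_fst
  have hs1 : Continuous fun q : I × X => 1 - (q.1 : ℝ) := continuous_const.sub hs
  have hy : Continuous fun q : I × X => yy (a q.2) (V q.2) q.1 := by
    have h1 : Continuous fun q : I × X => a q.2 * V q.2 := (a.continuous.matrix_mul hVc).comp continuous_snd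
    have h2 : Continuous fun q : I × X => V q.2 := hVc.comp continuous_snd
    exact (hs1.smul h1).add (hs.smul h2)
  have hkc : Continuous fun q : I × X => kk (a q.2) (V q.2) q.1 := by
    have h1 := hAi.comp (continuous_snd (X := I))
    have h2 := hGi.comp (continuous_snd (X := I))
    exact (hs1.smul h1).add (hs.smul h2)
  have hh' : Continuous fun q : I × X => hh (a q.2) (V q.2) q.1 := by
    have h3 := hSc.comp (continuous_snd (X := I))
    exact ((hy.matrix_mul hkc).matrix_mul hy.matrix_conjTranspose).add h3
  refine ⟨ContinuousMap.curry ⟨_, hh'⟩, fun t x => ?_, ?_, fun t x => ?_, ⟨_, hpc⟩, fun x => ?_,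
    ⟨m, fun x => prj_rank (hVi x), le_rfl⟩, ?_, fun x => ?_⟩
  · exact hh_posSemidef (ha x) (hVa x) t.2.1 t.2.2
  · ext1 x
    exact hh_zero (ha x)
  · exact hh_rank (ha x) (hVa x) t.2.1 t.2.2
  · exact ⟨prj_herm, prj_idem (hVi x)⟩
  · have hT := fun x => twist hCC (hZu x) (hVi x) (hZ x)
    obtain ⟨u, hu1, hu2⟩ := polar_conj (q := C * C.conjTranspose)
      (p := fun x => prj (V x)) (((hpc.matrix_mul hZc).matrix_mul continuous_const).add
        (((continuous_const.sub hpc).matrix_mul hZc).matrix_mul continuous_const)) (fun x => (hT x).2)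
      (fun x => prj_herm) (Matrix.isHermitian_mul_conjTranspose_self C) (fun x => (hT x).1)
    exact ⟨u, hu1, _, hu2⟩
  · have h1 := hh_one (b := a x) (V := V x)
    have h2 := prj_schur (ha x) (hVa x)
    have h3 := prj_idem (hVi x)
    change prj (V x) * hh (a x) (V x) 1 = prj (V x) ∧ hh (a x) (V x) 1 * prj (V x) = prj (V x)
    rw [h1, Matrix.mul_add, Matrix.add_mul, h2.1, h2.2, h3, add_zero]
    exact ⟨rfl, rfl⟩
end

section
/- Let X be a compact metric space of finite covering dimension, let n be a positive integer, and let a ∈ M_n(C(X)) be positive. Suppose l, k ∈ ℕ satisfy k ≤ n, l ≤ dim(X), 4·dim(X) ≤ k − l, and l ≤ rank(a(x)) ≤ k for all x ∈ X. Then there is a homotopy h : [0,1] → M_n(C(X))₊ such that: (i) h(0) = a; (ii) l ≤ rank(h(t)(x)) ≤ k for all x ∈ X and t ∈ [0,1]; (iii) rank(h(1)(x)) ≥ l + dim(X) for all x ∈ X. -/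
open scoped ComplexOrder unitInterval

lemma aux_bad_dense {ι : Type*} {l m d : ℕ} (hl : 0 < l) (hm : d + l < m) (s : Finset ι)
    (w : ι → (Fin l → Fin m → ℂ)) :
    Dense {g : Fin l → Fin m → ℂ | ∀ T ⊆ s, T.card ≤ d → ∀ c : ι → ℂ,
      LinearIndependent ℂ (g + ∑ j ∈ T, c j • w j)} := by
  classical
  let Φ : (T : Finset ι) → (i : Fin l) →
      ((T → ℂ) × (Fin l → ℂ) × ({j : Fin l // j ≠ i} → Fin m → ℂ)) → (Fin l → Fin m → ℂ) :=
    fun T i p j q => (if h : j ≠ i then p.2.2 ⟨j, h⟩ q else - ∑ j', p.2.1 j'.1 * p.2.2 j' q)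
      - ∑ t : T, p.1 t * w t j q
  have hΦ : ∀ T i, ContDiff ℝ 1 (Φ T i) := by
    intro T i
    rw [contDiff_pi]; intro j
    rw [contDiff_pi]; intro q
    by_cases h : j ≠ i
    · simp only [Φ, h, dif_pos, ne_eq, not_false_eq_true]
      fun_prop
    · simp only [Φ, h, dif_neg, not_false_eq_true]
      fun_prop
  let B : Set (Fin l → Fin m → ℂ) :=
    ⋃ T : {T : Finset ι // T ∈ s.powerset ∧ T.card ≤ d}, ⋃ i : Fin l, Set.range (Φ T.1 i)
  have hfin : Finite {T : Finset ι // T ∈ s.powerset ∧ T.card ≤ d} :=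
    Set.Finite.subset (s.powerset.finite_toSet) (fun T hT => hT.1)
  have hB : dimH B < (Module.finrank ℝ (Fin l → Fin m → ℂ) : ℕ) := by
    have h1 : dimH B ≤ ((2 * (d + l + (l - 1) * m) : ℕ) : ENNReal) := by
      rw [dimH_iUnion]
      refine iSup_le fun T => ?_
      rw [dimH_iUnion]
      refine iSup_le fun i => ?_
      refine (hΦ T.1 i).dimH_range_le.trans ?_
      have : Module.finrank ℝ ((T.1 → ℂ) × (Fin l → ℂ) × ({j : Fin l // j ≠ i} → Fin m → ℂ))
          = T.1.card * 2 + (l * 2 + (l - 1) * (m * 2)) := by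
        simp [Module.finrank_pi_fintype, Complex.finrank_real_complex]
      rw [this]
      have := T.2.2
      norm_cast
      nlinarith
    refine h1.trans_lt ?_
    have : Module.finrank ℝ (Fin l → Fin m → ℂ) = l * (m * 2) := by
      simp [Module.finrank_pi_fintype, Complex.finrank_real_complex]
    rw [this]
    norm_cast
    obtain ⟨l, rfl⟩ : ∃ l', l = l' + 1 := ⟨l - 1, by omega⟩
    simp only [Nat.add_sub_cancel]
    nlinarith
  refine (dense_compl_of_dimH_lt_finrank hB).mono ?_
  intro g hg T hT hcard c
  by_contra hcon
  apply hg
  rw [Fintype.not_linearIndependent_iff] at hcon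
  obtain ⟨v, hv, i, hi⟩ := hcon
  refine Set.mem_iUnion.2 ⟨⟨T, Finset.mem_powerset.2 hT, hcard⟩, Set.mem_iUnion.2 ⟨i, ?_⟩⟩
  refine ⟨(fun t => c t, fun j => (v i)⁻¹ * v j, fun j => (g + ∑ j ∈ T, c j • w j) j.1), ?_⟩
  funext j q
  have hsum : ∑ t : T, c t * w t j q = (∑ t ∈ T, c t • w t) j q := by
    rw [Finset.sum_coe_sort T (fun t => c t * w t j q)]
    simp [Finset.sum_apply]
  simp only [Φ]
  rw [hsum]
  by_cases h : j ≠ i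
  · simp only [h, dif_pos, ne_eq, not_false_eq_true, Pi.add_apply]
    ring
  · simp only [h, dif_neg, not_false_eq_true]
    push Not at h
    subst h
    have := congrFun hv q
    simp only [Finset.sum_apply, Pi.smul_apply, smul_eq_mul, Pi.zero_apply] at this
    rw [← Finset.add_sum_erase _ _ (Finset.mem_univ j)] at this
    have e : ∑ j' : {j' : Fin l // j' ≠ j}, (v j)⁻¹ * v j'.1 * (g + ∑ j ∈ T, c j • w j) j'.1 q
        = (v j)⁻¹ * ∑ x ∈ Finset.univ.erase j, v x * (g + ∑ j ∈ T, c j • w j) x q := by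
      rw [Finset.mul_sum, Finset.sum_subtype (F := inferInstance) (p := fun x => x ≠ j)
        (Finset.univ.erase j) (by simp)]
      simp only [mul_assoc]
    rw [e, eq_neg_of_add_eq_zero_right this]
    simp only [Pi.add_apply]
    field_simp
    ring

lemma aux_generic {ι : Type*} {l m d : ℕ} (hl : 0 < l) (hm : d + l < m)
    (p : ι → (Fin l → Fin m → ℂ)) {ε : ℝ} (hε : 0 < ε) (s : Finset ι) :
    ∃ g : ι → (Fin l → Fin m → ℂ), (∀ i, dist (g i) (p i) < ε) ∧
      ∀ T ⊆ s, T.card ≤ d + 1 → ∀ c : ι → ℂ, (∃ i ∈ T, c i ≠ 0) →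
        LinearIndependent ℂ (∑ i ∈ T, c i • g i) := by
  classical
  induction s using Finset.induction_on with
  | empty =>
    refine ⟨p, by simp [hε], ?_⟩
    intro T hT _ c ⟨i, hi, _⟩
    exact absurd (hT hi) (by simp)
  | insert i₀ s hi₀ ih =>
    obtain ⟨g, hg, hgood⟩ := ih
    obtain ⟨u, hu, hud⟩ := (Metric.dense_iff.1 (aux_bad_dense hl hm s g)) (p i₀) ε hε
    refine ⟨Function.update g i₀ u, ?_, ?_⟩
    · intro i
      by_cases h : i = i₀
      · subst h; simpa using hu
      · simpa [Function.update_of_ne h] using hg i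
    · intro T hT hcard c hc
      have hers : T.erase i₀ ⊆ s := by
        intro x hx
        rw [Finset.mem_erase] at hx
        exact (Finset.mem_insert.1 (hT hx.2)).resolve_left hx.1
      have hsumers : ∀ c : ι → ℂ, ∑ i ∈ T.erase i₀, c i • Function.update g i₀ u i
          = ∑ i ∈ T.erase i₀, c i • g i := by
        intro c
        refine Finset.sum_congr rfl fun i hi => ?_
        rw [Function.update_of_ne (Finset.ne_of_mem_erase hi)]
      by_cases hT0 : i₀ ∈ T
      · have hcard' : (T.erase i₀).card ≤ d := by
          rw [Finset.card_erase_of_mem hT0]; omega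
        rw [← Finset.add_sum_erase _ _ hT0, hsumers]
        by_cases hc0 : c i₀ = 0
        · rw [hc0, zero_smul, zero_add]
          refine hgood _ hers (by omega) c ?_
          obtain ⟨i, hi, hci⟩ := hc
          refine ⟨i, Finset.mem_erase.2 ⟨?_, hi⟩, hci⟩
          rintro rfl; exact hci hc0
        · have h1 := hud (T.erase i₀) hers hcard' (fun i => (c i₀)⁻¹ * c i)
          have h2 := h1.units_smul (fun _ => Units.mk0 (c i₀) hc0)
          convert h2 using 1
          funext j q
          simp only [Function.update_self, Pi.add_apply, Pi.smul_apply, smul_eq_mul,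
            Finset.sum_apply, Pi.smul_apply', Units.smul_def, Units.val_mk0, mul_add,
            Finset.mul_sum]
          congr 1
          refine Finset.sum_congr rfl fun i _ => ?_
          field_simp
      · have : T.erase i₀ = T := Finset.erase_eq_of_notMem hT0
        rw [← this, hsumers]
        refine hgood _ hers (by rw [this]; exact hcard) c ?_
        rw [this]; exact hc

lemma aux_approx {X : Type*} [MetricSpace X] [CompactSpace X] {d l m : ℕ}
    (hdim : HasCovDimLE X d) (hl : 0 < l) (hm : d + l < m) (g₀ : C(X, Fin l → Fin m → ℂ))
    {ε : ℝ} (hε : 0 < ε) :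
    ∃ g : C(X, Fin l → Fin m → ℂ), (∀ x, dist (g x) (g₀ x) < ε) ∧
      ∀ x, LinearIndependent ℂ (g x) := by
  classical
  obtain ⟨𝒱, hVo, hVc, hVr, hVn⟩ := hdim
    (Set.range fun y : X => g₀ ⁻¹' Metric.ball (g₀ y) (ε / 2))
    (by rintro _ ⟨y, rfl⟩; exact Metric.isOpen_ball.preimage g₀.continuous)
    (by
      refine Set.eq_univ_of_forall fun x => ⟨_, ⟨x, rfl⟩, ?_⟩
      simp [hε])
  have hVr' : ∀ V : 𝒱, ∃ y : X, ∀ x ∈ V.1, dist (g₀ x) (g₀ y) < ε / 2 := by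
    rintro ⟨V, hV⟩
    obtain ⟨_, ⟨y, rfl⟩, hy⟩ := hVr V hV
    exact ⟨y, fun x hx => hy hx⟩
  choose y hy using hVr'
  obtain ⟨s, hs⟩ := isCompact_univ.elim_finite_subcover (fun V : 𝒱 => V.1)
    (fun V => hVo V.1 V.2) (by rw [← Set.sUnion_eq_iUnion, hVc])
  obtain ⟨f, hf⟩ := PartitionOfUnity.exists_isSubordinate isClosed_univ
    (fun V : s => V.1.1) (fun V => hVo V.1.1 V.1.2)
    (by
      intro x hx
      obtain ⟨V, hV, hxV⟩ := Set.mem_iUnion₂.1 (hs hx)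
      exact Set.mem_iUnion.2 ⟨⟨V, hV⟩, hxV⟩)
  obtain ⟨g, hg, hgood⟩ := aux_generic hl hm (fun V : s => g₀ (y V.1)) (half_pos hε) Finset.univ
  have hsum : ∀ x, ∑ V : s, f V x = 1 := by
    intro x
    rw [← finsum_eq_sum_of_fintype]
    exact f.sum_eq_one (Set.mem_univ x)
  refine ⟨⟨fun x => ∑ V : s, f V x • g V, by fun_prop⟩, ?_, ?_⟩
  · intro x
    have hconv := convex_ball (g₀ x) ε
    have := hconv.finsum_mem (w := fun V : s => f V x) (z := g) (fun V => f.nonneg V x)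
      (f.sum_eq_one (Set.mem_univ x)) ?_
    · rw [finsum_eq_sum_of_fintype] at this
      exact this
    · intro V hV
      have hxV : x ∈ V.1.1 := hf V (subset_tsupport _ hV)
      have h1 := hy V.1 x hxV
      have h2 := hg V
      rw [Metric.mem_ball]
      calc dist (g V) (g₀ x) ≤ dist (g V) (g₀ (y V.1)) + dist (g₀ (y V.1)) (g₀ x) :=
            dist_triangle _ _ _
        _ < ε / 2 + ε / 2 := by rw [dist_comm (g₀ (y V.1))]; exact add_lt_add h2 h1
        _ = ε := by ring
  · intro x
    let T : Finset s := Finset.univ.filter fun V => f V x ≠ 0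
    have hTcard : T.card ≤ d + 1 := by
      obtain ⟨hfin, hn⟩ := hVn x
      refine le_trans ?_ hn
      rw [Set.ncard_eq_toFinset_card _ hfin]
      refine Finset.card_le_card_of_injOn (fun V : s => V.1.1) ?_ ?_
      · intro V hV
        have hV' : f V x ≠ 0 := by simpa [T] using hV
        have hxV : x ∈ V.1.1 := hf V (subset_tsupport _ hV')
        simp only [Set.Finite.coe_toFinset]
        exact ⟨V.1.2, hxV⟩
      · intro V _ W _ h
        exact Subtype.ext (Subtype.ext h)
    have hex : ∃ V ∈ T, ((f V x : ℝ) : ℂ) ≠ 0 := by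
      by_contra hcon
      push Not at hcon
      have : ∑ V : s, f V x = 0 := by
        refine Finset.sum_eq_zero fun V _ => ?_
        by_contra hne
        exact hne (by exact_mod_cast hcon V (by simp [T, hne]))
      rw [hsum] at this
      exact one_ne_zero this
    have := hgood T (Finset.subset_univ _) hTcard (fun V => ((f V x : ℝ) : ℂ)) hex
    convert this using 1
    change ∑ V : s, f V x • g V = _
    rw [Finset.sum_filter]
    refine Finset.sum_congr rfl fun V _ => ?_
    by_cases h : f V x = 0
    · simp [h]
    · rw [if_pos h]
      rfl

section Aux
attribute [local instance] Matrix.normedAddCommGroup Matrix.normedSpace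

lemma aux_factor {n l : ℕ} (a : Matrix (Fin n) (Fin n) ℂ) (h : l ≤ a.rank) :
    ∃ (A : Matrix (Fin l) (Fin n) ℂ) (R : Matrix (Fin n) (Fin l) ℂ), A * a * R = 1 := by
  classical
  obtain ⟨v, hv⟩ := exists_linearIndependent_of_le_finrank (R := ℂ)
    (M := LinearMap.range a.mulVecLin) (n := l) h
  have hv' : ∀ i, ∃ u, a.mulVec u = (v i : Fin n → ℂ) := fun i => (v i).2
  choose u hu using hv'
  let R : Matrix (Fin n) (Fin l) ℂ := Matrix.of fun i j => u j i
  have hcol : (a * R).col = fun j => (v j : Fin n → ℂ) := by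
    funext j i
    rw [← hu j]
    rfl
  have hinj : Function.Injective (a * R).mulVec := by
    rw [Matrix.mulVec_injective_iff, hcol]
    exact hv.map' (Submodule.subtype _) (Submodule.ker_subtype _)
  obtain ⟨f, hf⟩ := LinearMap.exists_leftInverse_of_injective (a * R).mulVecLin
    (LinearMap.ker_eq_bot.2 hinj)
  refine ⟨LinearMap.toMatrix' f, R, ?_⟩
  rw [Matrix.mul_assoc]
  have := congrArg LinearMap.toMatrix' hf
  rw [LinearMap.toMatrix'_comp, LinearMap.toMatrix'_id] at this
  exact (congrArg _ (LinearMap.toMatrix'_toLin' (a * R)).symm).trans this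

lemma aux_dense {X : Type*} [MetricSpace X] [CompactSpace X] {d l m n : ℕ}
    (hdim : HasCovDimLE X d) (hl : 0 < l) (hm : d + l < m)
    (a : C(X, Matrix (Fin n) (Fin n) ℂ)) (A : Matrix (Fin l) (Fin n) ℂ)
    (R : Matrix (Fin n) (Fin l) ℂ) (K : Set X) (hK : IsClosed K)
    (hdet : ∀ x ∈ K, (A * a x * R).det ≠ 0) :
    Dense {S : C(X, Matrix (Fin n) (Fin m) ℂ) |
      ∀ x ∈ K, LinearIndependent ℂ (A * a x * S x).row} := by
  refine (Metric.dense_iff (α := C(X, Fin n → Fin m → ℂ))).2 ?_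
  intro (S : C(X, Matrix (Fin n) (Fin m) ℂ)) ε hε
  obtain ⟨g₀, hg₀⟩ := ContinuousMap.exists_restrict_eq (Y := Fin l → Fin m → ℂ) hK
    ⟨fun x : K => ((A * a x * R).det)⁻¹ • ((A * a x * R).adjugate * (A * a x * S x)), by
      have h1 : Continuous fun x : K => A * a x * R := by fun_prop
      have h2 : Continuous fun x : K => ((A * a x * R).det)⁻¹ :=
        h1.matrix_det.inv₀ fun x => hdet x x.2
      have h3 : Continuous fun x : K => (A * a x * R).adjugate * (A * a x * S x) :=
        h1.matrix_adjugate.matrix_mul (by fun_prop)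
      exact h2.smul h3⟩
  have hcont : Continuous fun W : Matrix (Fin l) (Fin m) ℂ => R * W := by fun_prop
  obtain ⟨δ, hδ, hδ'⟩ := Metric.continuous_iff.1 hcont 0 ε hε
  obtain ⟨g, hg, hgood⟩ := aux_approx hdim hl hm g₀ hδ
  let gM : C(X, Matrix (Fin l) (Fin m) ℂ) := g
  let g₀M : C(X, Matrix (Fin l) (Fin m) ℂ) := g₀
  refine ⟨⟨fun x => S x + R * (gM x - g₀M x), by fun_prop⟩, ?_, ?_⟩
  · refine (ContinuousMap.dist_lt_iff (β := Fin n → Fin m → ℂ) hε).2 ?_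
    intro x
    change dist (S x + R * (gM x - g₀M x)) (S x) < ε
    have h1 : dist (gM x) (g₀M x) < δ := hg x
    have := hδ' (gM x - g₀M x) (by rwa [dist_zero_right, ← dist_eq_norm])
    simpa [dist_eq_norm] using this
  · intro x hx
    have e : (g₀M x) =
        ((A * a x * R).det)⁻¹ • ((A * a x * R).adjugate * (A * a x * S x)) :=
      congrArg (fun f => f ⟨x, hx⟩) hg₀
    have e2 : (A * a x * R) * g₀M x = A * a x * S x := by
      rw [e, Matrix.mul_smul, ← Matrix.mul_assoc, Matrix.mul_adjugate, Matrix.smul_mul,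
        Matrix.one_mul, inv_smul_smul₀ (hdet x hx)]
    have e3 : A * a x * (S x + R * (gM x - g₀M x)) = (A * a x * R) * gM x := by
      rw [Matrix.mul_add, ← Matrix.mul_assoc, Matrix.mul_sub, e2]
      abel
    change LinearIndependent ℂ (A * a x * (S x + R * (gM x - g₀M x))).row
    rw [e3, ← Matrix.vecMul_injective_iff]
    have i1 : Function.Injective (gM x).vecMul := Matrix.vecMul_injective_iff.2 (hgood x)
    have i2 : Function.Injective (A * a x * R).vecMul := by
      rw [Matrix.vecMul_injective_iff_isUnit, Matrix.isUnit_iff_isUnit_det]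
      exact isUnit_iff_ne_zero.2 (hdet x hx)
    intro v w hvw
    have hvw' : Matrix.vecMul v ((A * a x * R) * gM x) = Matrix.vecMul w ((A * a x * R) * gM x) :=
      hvw
    rw [← Matrix.vecMul_vecMul v, ← Matrix.vecMul_vecMul w] at hvw'
    exact i2 (i1 hvw')

lemma aux_S {X : Type*} [MetricSpace X] [CompactSpace X] {d l m n : ℕ}
    (hdim : HasCovDimLE X d) (hl : 0 < l) (hm : d + l < m)
    (a : C(X, Matrix (Fin n) (Fin n) ℂ)) (ha : ∀ x, l ≤ (a x).rank) :
    ∃ S : C(X, Matrix (Fin n) (Fin m) ℂ), ∀ x, l ≤ (a x * S x).rank := by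
  choose A R hAR using fun x => aux_factor (a x) (ha x)
  have hK : ∀ x₀ : X, ∃ K : Set X, IsCompact K ∧ x₀ ∈ interior K ∧
      K ⊆ {x | (A x₀ * a x * R x₀).det ≠ 0} := by
    intro x₀
    refine exists_compact_subset ?_ ?_
    · have : Continuous fun x => (A x₀ * a x * R x₀).det := by fun_prop
      exact isOpen_ne.preimage this
    · simp [hAR]
  choose K hKc hKi hKd using hK
  obtain ⟨s, hs⟩ := isCompact_univ.elim_finite_subcover (fun x => interior (K x))
    (fun x => isOpen_interior) (fun x _ => Set.mem_iUnion.2 ⟨x, hKi x⟩)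
  have : BaireSpace C(X, Matrix (Fin n) (Fin m) ℂ) :=
    inferInstanceAs (BaireSpace C(X, Fin n → Fin m → ℂ))
  have hdense := dense_iInter_of_isOpen (ι := s)
    (f := fun i => {S : C(X, Matrix (Fin n) (Fin m) ℂ) |
      ∀ x ∈ K i.1, LinearIndependent ℂ (A i.1 * a x * S x).row}) ?_
    (fun i => aux_dense hdim hl hm a (A i.1) (R i.1) (K i.1) (hKc i.1).isClosed (hKd i.1))
  · obtain ⟨S, hS⟩ := hdense.nonempty
    refine ⟨S, fun x => ?_⟩
    obtain ⟨i, hi, hx⟩ := Set.mem_iUnion₂.1 (hs (Set.mem_univ x))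
    have := (Set.mem_iInter.1 hS ⟨i, hi⟩) x (interior_subset hx)
    have h2 := this.rank_matrix
    rw [Fintype.card_fin] at h2
    rw [← h2, Matrix.mul_assoc]
    exact Matrix.rank_mul_le_right _ _
  · intro i
    let F : C(X, Matrix (Fin n) (Fin m) ℂ) → C(X, Matrix (Fin l) (Fin m) ℂ) :=
      fun S => ⟨fun x => A i.1 * a x * S x, by fun_prop⟩
    have hF : Continuous F := by
      refine ContinuousMap.continuous_of_continuous_uncurry _ ?_
      change Continuous fun p : C(X, Matrix (Fin n) (Fin m) ℂ) × X => A i.1 * a p.2 * p.1 p.2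
      fun_prop
    have ho : IsOpen {M : Matrix (Fin l) (Fin m) ℂ | LinearIndependent ℂ M.row} :=
      isOpen_setOfPred_linearIndependent (𝕜 := ℂ) (E := Fin m → ℂ) (ι := Fin l)
    exact (ContinuousMap.isOpen_setOfPred_mapsTo (hKc i.1) ho).preimage hF
end Aux

lemma aux_rank_add_le {n : ℕ} (A B : Matrix (Fin n) (Fin n) ℂ) :
    (A + B).rank ≤ A.rank + B.rank := by
  unfold Matrix.rank
  rw [Matrix.mulVecLin_add]
  refine le_trans (Submodule.finrank_mono ?_) (Submodule.finrank_add_le_finrank_add_finrank _ _)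
  rintro _ ⟨v, rfl⟩
  exact Submodule.add_mem_sup ⟨v, rfl⟩ ⟨v, rfl⟩

lemma aux_rank_le_add {n : ℕ} {A B : Matrix (Fin n) (Fin n) ℂ} (hA : A.PosSemidef)
    (hB : B.PosSemidef) : A.rank ≤ (A + B).rank := by
  have h1 := LinearMap.finrank_range_add_finrank_ker A.mulVecLin
  have h2 := LinearMap.finrank_range_add_finrank_ker (A + B).mulVecLin
  have h3 : Module.finrank ℂ (LinearMap.ker (A + B).mulVecLin) ≤
      Module.finrank ℂ (LinearMap.ker A.mulVecLin) := by
    refine Submodule.finrank_mono ?_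
    intro v hv
    rw [LinearMap.mem_ker, Matrix.mulVecLin_apply] at hv ⊢
    have h := congrArg (fun u => star v ⬝ᵥ u) hv
    simp only [Matrix.add_mulVec, dotProduct_add, dotProduct_zero] at h
    have hA' := hA.dotProduct_mulVec_nonneg v
    have hB' := hB.dotProduct_mulVec_nonneg v
    rw [← hA.dotProduct_mulVec_zero_iff]
    exact ((add_eq_zero_iff_of_nonneg hA' hB').1 h).1
  unfold Matrix.rank
  omega

lemma aux_rank_le_add' {n : ℕ} {A B : Matrix (Fin n) (Fin n) ℂ} (hA : A.PosSemidef)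
    (hB : B.PosSemidef) : B.rank ≤ (A + B).rank := by
  rw [add_comm]; exact aux_rank_le_add hB hA

lemma aux_rank_smul_le {n : ℕ} (c : ℂ) (A : Matrix (Fin n) (Fin n) ℂ) :
    (c • A).rank ≤ A.rank := by
  have : c • A = A * (c • (1 : Matrix (Fin n) (Fin n) ℂ)) := by simp
  rw [this]
  exact Matrix.rank_mul_le_left _ _

lemma aux_rank_le_smul {n : ℕ} {c : ℂ} (hc : c ≠ 0) (A : Matrix (Fin n) (Fin n) ℂ) :
    A.rank ≤ (c • A).rank := by
  have := aux_rank_smul_le c⁻¹ (c • A)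
  rwa [inv_smul_smul₀ hc] at this

lemma aux_proj {n r : ℕ} (h : r ≤ n) :
    ∃ p : Matrix (Fin n) (Fin n) ℂ, p.PosSemidef ∧ p.rank = r := by
  classical
  refine ⟨Matrix.diagonal fun i => if i.1 < r then 1 else 0, ?_, ?_⟩
  · rw [Matrix.posSemidef_diagonal_iff]
    intro i
    split_ifs <;> simp
  · rw [Matrix.rank_diagonal]
    have : Fintype.card {i : Fin n // i.1 < r} = r := by
      rw [Fintype.card_subtype, Fin.card_filter_val_lt]
      omega
    refine Eq.trans ?_ this
    refine Fintype.card_congr (Equiv.subtypeEquivRight ?_)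
    intro i
    simp

/-- Let `a ∈ M_n(C(X))` be positive on a compact metric space `X` of finite
covering dimension `d`, with `k ≤ n`, `l ≤ d`, `4d ≤ k - l`, and `l ≤ rank(a(x)) ≤ k` for
all `x`.  Then there is a homotopy `h` of positive elements with `h 0 = a`, ranks staying in
`[l, k]`, and `rank(h 1 (x)) ≥ l + d` everywhere. -/
theorem stmt3 {X : Type*} [MetricSpace X] [CompactSpace X] (d : ℕ) (hdim : IsCovDim X d)
    (n l k : ℕ) (hn : 0 < n) (hkn : k ≤ n) (hld : l ≤ d) (hlk : l + 4 * d ≤ k)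
    (a : C(X, Matrix (Fin n) (Fin n) ℂ)) (ha : ∀ x, (a x).PosSemidef)
    (hrank : ∀ x, l ≤ (a x).rank ∧ (a x).rank ≤ k) :
    ∃ h : C(I, C(X, Matrix (Fin n) (Fin n) ℂ)),
      (∀ (t : I) (x : X), ((h t) x).PosSemidef) ∧
      h 0 = a ∧
      (∀ (t : I) (x : X), l ≤ ((h t) x).rank ∧ ((h t) x).rank ≤ k) ∧
      (∀ x : X, l + d ≤ ((h 1) x).rank) := by
  obtain ⟨S, hS⟩ : ∃ S : C(X, Matrix (Fin n) (Fin (3 * d)) ℂ), ∀ x, l ≤ (a x * S x).rank := by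
    rcases Nat.eq_zero_or_pos l with rfl | hl
    · exact ⟨ContinuousMap.const X 0, fun x => Nat.zero_le _⟩
    · exact aux_S hdim.1 hl (by omega) a (fun x => (hrank x).1)
  obtain ⟨p, hp, hpr⟩ := aux_proj (n := n) (r := l + d) (by omega)
  let b : X → Matrix (Fin n) (Fin n) ℂ := fun x => (a x * S x) * (a x * S x).conjTranspose
  have hbc : Continuous b := by
    have h1 : Continuous fun x => a x * S x := by fun_prop
    exact h1.matrix_mul h1.matrix_conjTranspose
  have hb : ∀ x, (b x).PosSemidef := fun x => Matrix.posSemidef_self_mul_conjTranspose _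
  have hbr : ∀ x, (b x).rank = (a x * S x).rank := fun x =>
    Matrix.rank_self_mul_conjTranspose _
  have hb1 : ∀ x, l ≤ (b x).rank := fun x => (hbr x).symm ▸ hS x
  have hb2 : ∀ x, (b x).rank ≤ 3 * d := fun x => (hbr x).symm ▸ Matrix.rank_le_width _
  let u : I → ℝ := fun t => max (1 - 2 * (t : ℝ)) 0
  let v : I → ℝ := fun t => min (2 * (t : ℝ)) 1
  let w : I → ℝ := fun t => max (2 * (t : ℝ) - 1) 0
  have hu : ∀ t, (0 : ℂ) ≤ (u t : ℂ) := fun t => by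
    exact_mod_cast le_max_right _ _
  have hv : ∀ t, (0 : ℂ) ≤ (v t : ℂ) := fun t => by
    have : 0 ≤ v t := le_min (by have := t.2.1; linarith) zero_le_one
    exact_mod_cast this
  have hw : ∀ t, (0 : ℂ) ≤ (w t : ℂ) := fun t => by
    exact_mod_cast le_max_right _ _
  let H : C(I × X, Matrix (Fin n) (Fin n) ℂ) :=
    ⟨fun q => (u q.1 : ℂ) • a q.2 + (v q.1 : ℂ) • b q.2 + (w q.1 : ℂ) • p, by
      have h1 : Continuous fun q : I × X => (u q.1 : ℂ) := by fun_prop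
      have h2 : Continuous fun q : I × X => (v q.1 : ℂ) := by fun_prop
      have h3 : Continuous fun q : I × X => (w q.1 : ℂ) := by fun_prop
      have h4 : Continuous fun q : I × X => a q.2 := by fun_prop
      have h5 : Continuous fun q : I × X => b q.2 := hbc.comp continuous_snd
      exact ((h1.smul h4).add (h2.smul h5)).add (h3.smul continuous_const)⟩
  have hH : ∀ t x, H.curry t x = (u t : ℂ) • a x + (v t : ℂ) • b x + (w t : ℂ) • p :=
    fun t x => rfl
  refine ⟨H.curry, ?_, ?_, ?_, ?_⟩
  · intro t x
    rw [hH]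
    exact (((ha x).smul (hu t)).add ((hb x).smul (hv t))).add (hp.smul (hw t))
  · ext1 x
    rw [hH]
    simp [u, v, w]
  · intro t x
    rw [hH]
    rcases le_total (2 * (t : ℝ)) 1 with ht | ht
    · have hw0 : w t = 0 := max_eq_right (by linarith)
      rw [hw0, Complex.ofReal_zero, zero_smul, add_zero]
      constructor
      · by_cases h0 : u t = 0
        · have h1 : 1 - 2 * (t : ℝ) ≤ 0 := h0 ▸ le_max_left _ _
          have hv1 : v t = 1 := min_eq_right (by linarith)
          rw [h0, hv1, Complex.ofReal_zero, zero_smul, zero_add, Complex.ofReal_one, one_smul]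
          exact hb1 x
        · refine (hrank x).1.trans ?_
          refine (aux_rank_le_smul (c := (u t : ℂ)) (by exact_mod_cast h0) (a x)).trans ?_
          exact aux_rank_le_add ((ha x).smul (hu t)) ((hb x).smul (hv t))
      · have e : (u t : ℂ) • a x + (v t : ℂ) • b x =
            a x * ((u t : ℂ) • (1 : Matrix (Fin n) (Fin n) ℂ)
              + (v t : ℂ) • (S x * (a x * S x).conjTranspose)) := by
          simp [b, Matrix.mul_add, Matrix.mul_assoc]
        rw [e]
        exact (Matrix.rank_mul_le_left _ _).trans (hrank x).2
    · have hu0 : u t = 0 := max_eq_right (by linarith)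
      have hv1 : v t = 1 := min_eq_right ht
      rw [hu0, hv1, Complex.ofReal_zero, zero_smul, zero_add, Complex.ofReal_one, one_smul]
      constructor
      · exact (hb1 x).trans (aux_rank_le_add (hb x) (hp.smul (hw t)))
      · have h1 := aux_rank_add_le (b x) ((w t : ℂ) • p)
        have h2 := aux_rank_smul_le (w t : ℂ) p
        have h3 := hb2 x
        omega
  · intro x
    rw [hH]
    have hw1 : w 1 = 1 := by simp [w]; norm_num
    have hA := ((ha x).smul (hu 1)).add ((hb x).smul (hv 1))
    rw [hw1, Complex.ofReal_one, one_smul]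
    rw [← hpr]
    exact aux_rank_le_add' hA hp
end

section
/- Let X be a compact metric space of finite covering dimension, let n be a positive integer, and let k, l ∈ ℕ satisfy k ≤ n and 4·dim(X) ≤ k − l. Then the set S = { a ∈ M_n(C(X)) : a is positive and l ≤ rank(a(x)) ≤ k for all x ∈ X }, equipped with the supremum-norm topology, is path connected. -/
open scoped ComplexOrder

lemma covBadSet_dimH {m n D : ℕ} (hm : 0 < m) (hmn : D + 2 * m < 2 * n + 2)
    {J : Type*} (F : Finset J) (hF : F.card ≤ D) (p : J → Fin m → Fin n → ℂ) :
    dimH {u : Fin m → Fin n → ℂ | ∃ c : J → ℝ,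
      ¬ LinearIndependent ℂ (u + ∑ j ∈ F, c j • p j)} <
      Module.finrank ℝ (Fin m → Fin n → ℂ) := by
  classical
  have hfr : Module.finrank ℝ (Fin m → Fin n → ℂ) = m * (n * 2) := by
    simp [Module.finrank_pi_fintype, Complex.finrank_real_complex]
  cases m with
  | zero => omega
  | succ m =>
    let f : Fin (m+1) → ((F → ℝ) × (Fin m → Fin n → ℂ) × (Fin m → ℂ)) → (Fin (m+1) → Fin n → ℂ) :=
      fun q x => q.insertNth (α := fun _ => Fin n → ℂ) (∑ i, x.2.2 i • x.2.1 i) x.2.1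
        - ∑ j : F, x.1 j • p j
    have hf : ∀ q, ContDiff ℝ 1 (f q) := by
      intro q
      apply ContDiff.sub
      · rw [contDiff_pi]
        intro i
        refine Fin.succAboveCases q ?_ ?_ i
        · simp only [Fin.insertNth_apply_same]
          fun_prop
        · intro i
          simp only [Fin.insertNth_apply_succAbove]
          fun_prop
      · fun_prop
    have hsub : {u : Fin (m+1) → Fin n → ℂ | ∃ c : J → ℝ,
      ¬ LinearIndependent ℂ (u + ∑ j ∈ F, c j • p j)} ⊆ ⋃ q, Set.range (f q) := by
      rintro u ⟨c, hc⟩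
      rw [Fintype.not_linearIndependent_iff] at hc
      obtain ⟨g, hg, q, hq⟩ := hc
      set w := u + ∑ j ∈ F, c j • p j with hw
      rw [Set.mem_iUnion]
      refine ⟨q, (fun j => c j, fun i => w (q.succAbove i), fun i => - g (q.succAbove i) / g q), ?_⟩
      have h1 : q.insertNth (α := fun _ => Fin n → ℂ) (∑ i, (- g (q.succAbove i) / g q) • w (q.succAbove i))
          (fun i => w (q.succAbove i)) = w := by
        rw [Fin.sum_univ_succAbove _ q] at hg
        have h2 : w q = ∑ i, (- g (q.succAbove i) / g q) • w (q.succAbove i) := by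
          have h3 : g q • w q = - ∑ i, g (q.succAbove i) • w (q.succAbove i) :=
            eq_neg_of_add_eq_zero_left hg
          have h4 : w q = (g q)⁻¹ • (g q • w q) := by
            rw [smul_smul, inv_mul_cancel₀ hq, one_smul]
          rw [h4, h3, smul_neg, Finset.smul_sum, ← Finset.sum_neg_distrib]
          refine Finset.sum_congr rfl fun i _ => ?_
          rw [smul_smul, ← neg_smul]
          congr 1
          field_simp
        rw [← h2]
        exact Fin.insertNth_self_removeNth q w
      simp only [f]
      rw [h1, hw, Finset.sum_coe_sort F (fun j => c j • p j)]
      simp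
    refine lt_of_le_of_lt (dimH_mono hsub) ?_
    rw [dimH_iUnion]
    have hle : ⨆ q, dimH (Set.range (f q)) ≤ ((D + m * (n * 2) + m * 2 : ℕ) : ENNReal) := by
      refine iSup_le fun q => (hf q).dimH_range_le.trans ?_
      have : Module.finrank ℝ ((F → ℝ) × (Fin m → Fin n → ℂ) × (Fin m → ℂ)) =
          F.card + (m * (n * 2) + m * 2) := by
        simp [Module.finrank_prod, Module.finrank_pi_fintype, Complex.finrank_real_complex]
      rw [this]
      exact_mod_cast (by omega)
    refine lt_of_le_of_lt hle ?_
    rw [hfr]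
    have : (m+1) * (n*2) = m * (n*2) + n * 2 := by ring
    exact_mod_cast (by omega)

lemma covPerturb {m n D : ℕ} (hmn : D + 2 * m < 2 * n + 2)
    {J : Type*} [Fintype J] (p : J → Fin m → Fin n → ℂ) {δ : ℝ} (hδ : 0 < δ) :
    ∃ p' : J → Fin m → Fin n → ℂ, (∀ j, dist (p' j) (p j) < δ) ∧
      ∀ F : Finset J, F.card ≤ D + 1 → ∀ c : J → ℝ, (∃ j ∈ F, c j ≠ 0) →
        LinearIndependent ℂ (∑ j ∈ F, c j • p' j) := by
  classical
  rcases Nat.eq_zero_or_pos m with rfl | hm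
  · exact ⟨p, by simpa using fun _ => hδ, fun F _ c _ => linearIndependent_empty_type⟩
  suffices h : ∀ T : Finset J, ∃ p' : J → Fin m → Fin n → ℂ, (∀ j, dist (p' j) (p j) < δ) ∧
      ∀ F : Finset J, F ⊆ T → F.card ≤ D + 1 → ∀ c : J → ℝ, (∃ j ∈ F, c j ≠ 0) →
        LinearIndependent ℂ (∑ j ∈ F, c j • p' j) by
    obtain ⟨p', h1, h2⟩ := h Finset.univ
    exact ⟨p', h1, fun F => h2 F (Finset.subset_univ F)⟩
  intro T
  induction T using Finset.induction_on with
  | empty =>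
    refine ⟨p, by simpa using fun _ => hδ, ?_⟩
    rintro F hF _ c ⟨j, hj, _⟩
    exact absurd (hF hj) (Finset.notMem_empty j)
  | insert t T ht ih =>
    obtain ⟨p', h1, h2⟩ := ih
    let bad : Set (Fin m → Fin n → ℂ) := ⋃ F : {F : Finset J // F.card ≤ D},
      {u | ∃ c : J → ℝ, ¬ LinearIndependent ℂ (u + ∑ j ∈ F.1, c j • p' j)}
    have hbad : dimH bad < Module.finrank ℝ (Fin m → Fin n → ℂ) := by
      have : Nonempty {F : Finset J // F.card ≤ D} := ⟨⟨∅, by simp⟩⟩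
      simp only [bad, dimH_iUnion]
      obtain ⟨F, hF⟩ := exists_eq_ciSup_of_finite (f := fun F : {F : Finset J // F.card ≤ D} =>
        dimH {u | ∃ c : J → ℝ, ¬ LinearIndependent ℂ (u + ∑ j ∈ F.1, c j • p' j)})
      rw [← hF]
      exact covBadSet_dimH hm hmn F.1 F.2 p'
    obtain ⟨u, hu, hud⟩ := (dense_compl_of_dimH_lt_finrank hbad).exists_dist_lt (p t) hδ
    refine ⟨Function.update p' t u, ?_, ?_⟩
    · intro j
      by_cases hj : j = t
      · subst hj
        simpa [dist_comm] using hud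
      · simpa [Function.update_of_ne hj] using h1 j
    · intro F hF hcard c hc
      have hsum : ∀ c : J → ℝ, ∑ j ∈ F.erase t, c j • Function.update p' t u j
          = ∑ j ∈ F.erase t, c j • p' j := by
        intro c
        refine Finset.sum_congr rfl fun j hj => ?_
        rw [Function.update_of_ne (Finset.ne_of_mem_erase hj)]
      have hsubT : F.erase t ⊆ T := by
        intro j hj
        have := hF (Finset.mem_of_mem_erase hj)
        exact (Finset.mem_insert.1 this).resolve_left (Finset.ne_of_mem_erase hj)
      by_cases htF : t ∈ F ∧ c t ≠ 0
      · obtain ⟨htF, hct⟩ := htF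
        have hcard' : (F.erase t).card ≤ D := by
          rw [Finset.card_erase_of_mem htF]; omega
        have hli : LinearIndependent ℂ (u + ∑ j ∈ F.erase t, (c j / c t) • p' j) := by
          by_contra hcon
          exact hu (Set.mem_iUnion.2 ⟨⟨F.erase t, hcard'⟩, fun j => c j / c t, hcon⟩)
        have hctC : (c t : ℂ) ≠ 0 := by exact_mod_cast hct
        have := hli.units_smul (fun _ => Units.mk0 (c t : ℂ) hctC)
        convert this using 1
        rw [← Finset.add_sum_erase F _ htF, hsum]
        have h3 : ∑ j ∈ F.erase t, c j • p' j
            = c t • ∑ j ∈ F.erase t, (c j / c t) • p' j := by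
          rw [Finset.smul_sum]
          refine Finset.sum_congr rfl fun j _ => ?_
          rw [smul_smul, mul_div_cancel₀ _ hct]
        rw [h3, ← smul_add, Function.update_self]
        ext i k
        simp [Units.smul_def]
      · have h4 : ∑ j ∈ F, c j • Function.update p' t u j = ∑ j ∈ F.erase t, c j • p' j := by
          by_cases htF' : t ∈ F
          · have hct : c t = 0 := by
              by_contra h
              exact htF ⟨htF', h⟩
            rw [← Finset.add_sum_erase F _ htF', hsum, hct, zero_smul, zero_add]
          · rw [← hsum, Finset.erase_eq_of_notMem htF']
        rw [h4]
        refine h2 _ hsubT ((Finset.card_erase_le).trans hcard) c ?_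
        obtain ⟨j, hj, hcj⟩ := hc
        refine ⟨j, Finset.mem_erase.2 ⟨?_, hj⟩, hcj⟩
        rintro rfl
        exact htF ⟨hj, hcj⟩

lemma covPartition.{u, v} {X : Type u} [MetricSpace X] [CompactSpace X] {d : ℕ}
    (hcov : HasCovDimLE X d) {Z : Type v} [PseudoMetricSpace Z] (g : C(X, Z)) {ε : ℝ} (hε : 0 < ε) :
    ∃ (ι : Type u) (_ : Fintype ι) (φ : ι → C(X, ℝ)) (z : ι → X),
      (∀ i x, 0 ≤ φ i x) ∧ (∀ x, ∑ i, φ i x = 1) ∧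
      (∀ x, ∃ F : Finset ι, F.card ≤ d + 1 ∧ ∀ i, i ∈ F ↔ φ i x ≠ 0) ∧
      ∀ i x, φ i x ≠ 0 → dist (g (z i)) (g x) < ε := by
  classical
  obtain ⟨V, hVo, hVc, hVr, hVm⟩ := hcov (Set.range fun z => g ⁻¹' Metric.ball (g z) ε)
    (by rintro _ ⟨z, rfl⟩; exact Metric.isOpen_ball.preimage g.continuous)
    (by
      refine Set.eq_univ_of_forall fun x => ?_
      exact ⟨_, ⟨x, rfl⟩, Metric.mem_ball_self hε⟩)
  have hVsub : Set.univ ⊆ ⋃ v : V, (v : Set X) := by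
    rw [← Set.sUnion_eq_iUnion, hVc]
  obtain ⟨T, hT⟩ := isCompact_univ.elim_finite_subcover (fun v : V => (v : Set X))
    (fun v => hVo v v.2) hVsub
  obtain ⟨ρ, hρ⟩ := PartitionOfUnity.exists_isSubordinate (isClosed_univ (X := X))
    (fun v : T => ((v : V) : Set X)) (fun v => hVo _ v.1.2)
    (by
      intro x hx
      obtain ⟨v, hv, hxv⟩ := Set.mem_iUnion₂.1 (hT hx)
      exact Set.mem_iUnion.2 ⟨⟨v, hv⟩, hxv⟩)
  have hz : ∀ v : T, ∃ z : X, ((v : V) : Set X) ⊆ g ⁻¹' Metric.ball (g z) ε := by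
    intro v
    obtain ⟨_, ⟨z, rfl⟩, hU⟩ := hVr _ v.1.2
    exact ⟨z, hU⟩
  choose z hz using hz
  have hmem : ∀ (i : T) x, ρ i x ≠ 0 → x ∈ ((i : V) : Set X) := fun i x hx =>
    hρ i (subset_tsupport _ hx)
  refine ⟨T, inferInstance, fun i => ρ i, z, fun i x => ρ.nonneg i x, ?_, ?_, ?_⟩
  · intro x
    rw [← finsum_eq_sum_of_fintype]
    exact ρ.sum_eq_one (Set.mem_univ x)
  · intro x
    refine ⟨Finset.univ.filter fun i => ρ i x ≠ 0, ?_, by simp⟩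
    obtain ⟨hfin, hcard⟩ := hVm x
    refine le_trans ?_ hcard
    rw [Set.ncard_eq_toFinset_card _ hfin]
    refine Finset.card_le_card_of_injOn (fun i : T => ((i : V) : Set X)) ?_ ?_
    · intro i hi
      simp only [Finset.coe_filter, Finset.mem_univ, true_and, Set.mem_ofPred_eq] at hi
      simpa using hmem i x hi
    · intro i _ j _ hij
      exact Subtype.ext (Subtype.ext hij)
  · intro i x hx
    have := hz i (hmem i x hx)
    rw [dist_comm]
    exact this

section CovProof

open scoped Matrix

lemma covApprox1 {X : Type*} [MetricSpace X] [CompactSpace X] {d : ℕ}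
    (hcov : HasCovDimLE X d) {m n : ℕ} (hmn : d + 2 * m < 2 * n + 2)
    (g : C(X, Fin m → Fin n → ℂ)) {δ : ℝ} (hδ : 0 < δ) :
    ∃ g' : C(X, Fin m → Fin n → ℂ), (∀ x, ‖g' x - g x‖ < δ) ∧
      ∀ x, LinearIndependent ℂ (g' x) := by
  classical
  obtain ⟨ι, _, φ, z, hφ0, hφ1, hφF, hφz⟩ := covPartition hcov g (half_pos hδ)
  obtain ⟨p, hp, hli⟩ := covPerturb hmn (fun i => g (z i)) (half_pos hδ)
  refine ⟨⟨fun x => ∑ i, φ i x • p i, by fun_prop⟩, ?_, ?_⟩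
  · intro x
    have h := (convex_ball (0 : Fin m → Fin n → ℂ) δ).sum_mem
      (t := Finset.univ.filter fun i => φ i x ≠ 0) (w := fun i => φ i x)
      (z := fun i => p i - g x) (fun i _ => hφ0 i x)
      (by rw [Finset.sum_filter_ne_zero]; exact hφ1 x)
      (by
        intro i hi
        have h1 := hφz i x (by simpa using hi)
        have h2 := dist_triangle (p i) (g (z i)) (g x)
        have h3 := hp i
        rw [mem_ball_zero_iff, ← dist_eq_norm]
        linarith)
    have h2 : ∑ i with φ i x ≠ 0, φ i x • (p i - g x) = ∑ i, φ i x • (p i - g x) := by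
      refine Finset.sum_subset (Finset.filter_subset _ _) ?_
      intro i _ hi
      have : φ i x = 0 := by simpa using hi
      rw [this, zero_smul]
    rw [h2, mem_ball_zero_iff] at h
    simp only [smul_sub, Finset.sum_sub_distrib, ← Finset.sum_smul, hφ1, one_smul] at h
    simpa using h
  · intro x
    obtain ⟨F, hFc, hF⟩ := hφF x
    have h0 : ∃ j ∈ F, φ j x ≠ 0 := by
      by_contra hcon
      push Not at hcon
      have : ∑ i, φ i x = 0 := Finset.sum_eq_zero fun i _ => by
        by_contra h
        exact h (hcon i ((hF i).2 h))
      rw [hφ1 x] at this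
      exact one_ne_zero this
    have h1 := hli F hFc (fun i => φ i x) h0
    have h2 : ∑ i ∈ F, φ i x • p i = ∑ i, φ i x • p i := by
      refine Finset.sum_subset (Finset.subset_univ _) ?_
      intro i _ hi
      have : φ i x = 0 := by
        by_contra h
        exact hi ((hF i).2 h)
      rw [this, zero_smul]
    rw [h2] at h1
    exact h1

lemma covApprox2 {X : Type*} [MetricSpace X] [CompactSpace X] {d : ℕ}
    (hcov : HasCovDimLE X d) {m n : ℕ} (hmn : 2 * d + 1 + 2 * m < 2 * n + 2)
    (s t : C(X, Fin m → Fin n → ℂ)) {δ : ℝ} (hδ : 0 < δ) :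
    ∃ s' t' : C(X, Fin m → Fin n → ℂ), (∀ x, ‖s' x - s x‖ < δ) ∧ (∀ x, ‖t' x - t x‖ < δ) ∧
      ∀ x, ∀ τ : ℝ, LinearIndependent ℂ ((1 - τ) • s' x + τ • t' x) := by
  classical
  obtain ⟨ι, _, φ, z, hφ0, hφ1, hφF, hφz⟩ := covPartition hcov (s.prodMk t) (half_pos hδ)
  obtain ⟨p, hp, hli⟩ := covPerturb hmn
    (Sum.elim (fun i => s (z i)) (fun i => t (z i)) : ι ⊕ ι → Fin m → Fin n → ℂ) (half_pos hδ)
  have key : ∀ (r : C(X, Fin m → Fin n → ℂ)) (q : ι → Fin m → Fin n → ℂ),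
      (∀ i, dist (q i) (r (z i)) < δ / 2) →
      (∀ i x, φ i x ≠ 0 → dist (r (z i)) (r x) < δ / 2) → 
      ∀ x, ‖∑ i, φ i x • q i - r x‖ < δ := by
    intro r q hq hr x
    have h := (convex_ball (0 : Fin m → Fin n → ℂ) δ).sum_mem
      (t := Finset.univ.filter fun i => φ i x ≠ 0) (w := fun i => φ i x)
      (z := fun i => q i - r x) (fun i _ => hφ0 i x)
      (by rw [Finset.sum_filter_ne_zero]; exact hφ1 x)
      (by
        intro i hi
        have h1 := hr i x (by simpa using hi)
        have h2 := dist_triangle (q i) (r (z i)) (r x)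
        have h3 := hq i
        rw [mem_ball_zero_iff, ← dist_eq_norm]
        linarith)
    have h2 : ∑ i with φ i x ≠ 0, φ i x • (q i - r x) = ∑ i, φ i x • (q i - r x) := by
      refine Finset.sum_subset (Finset.filter_subset _ _) ?_
      intro i _ hi
      have : φ i x = 0 := by simpa using hi
      rw [this, zero_smul]
    rw [h2, mem_ball_zero_iff] at h
    simp only [smul_sub, Finset.sum_sub_distrib, ← Finset.sum_smul, hφ1, one_smul] at h
    exact h
  refine ⟨⟨fun x => ∑ i, φ i x • p (Sum.inl i), by fun_prop⟩,
    ⟨fun x => ∑ i, φ i x • p (Sum.inr i), by fun_prop⟩, ?_, ?_, ?_⟩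
  · exact key s _ (fun i => hp (Sum.inl i))
      fun i x h => lt_of_le_of_lt (le_max_left _ _) (hφz i x h)
  · exact key t _ (fun i => hp (Sum.inr i))
      fun i x h => lt_of_le_of_lt (le_max_right _ _) (hφz i x h)
  · intro x τ
    obtain ⟨F, hFc, hF⟩ := hφF x
    obtain ⟨j, hjF, hj⟩ : ∃ j ∈ F, φ j x ≠ 0 := by
      by_contra hcon
      push Not at hcon
      have : ∑ i, φ i x = 0 := Finset.sum_eq_zero fun i _ => by
        by_contra h
        exact h (hcon i ((hF i).2 h))
      rw [hφ1 x] at this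
      exact one_ne_zero this
    have h1 := hli (F.disjSum F) (by rw [Finset.card_disjSum]; omega)
      (Sum.elim (fun i => (1 - τ) * φ i x) (fun i => τ * φ i x)) (by
        by_cases hτ : τ = 0
        · exact ⟨Sum.inl j, by simpa using hjF, by simpa [hτ] using hj⟩
        · exact ⟨Sum.inr j, by simpa using hjF, by simpa [hτ] using hj⟩)
    have h2 : ∀ q : ι → Fin m → Fin n → ℂ, ∑ i ∈ F, φ i x • q i = ∑ i, φ i x • q i := by
      intro q
      refine Finset.sum_subset (Finset.subset_univ _) ?_
      intro i _ hi
      have : φ i x = 0 := by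
        by_contra h
        exact hi ((hF i).2 h)
      rw [this, zero_smul]
    rw [Finset.sum_disjSum] at h1
    simp only [Sum.elim_inl, Sum.elim_inr, mul_smul, ← Finset.smul_sum, h2] at h1
    exact h1

lemma covTube {X Y E : Type*} [TopologicalSpace X] [TopologicalSpace Y] [NormedAddCommGroup E]
    {K : Set X} (hK : IsCompact K) {f : X → Y} (hf : Continuous f) {U : Set (Y × E)}
    (hU : IsOpen U) (h : ∀ x ∈ K, (f x, (0 : E)) ∈ U) :
    ∃ δ > 0, ∀ x ∈ K, ∀ p : E, ‖p‖ < δ → (f x, p) ∈ U := by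
  obtain ⟨u, v, _, hv, hu', hv', huv⟩ := generalized_tube_lemma (hK.image hf)
    (isCompact_singleton (x := (0 : E))) hU (by
      rintro ⟨y, e⟩ ⟨⟨x, hx, rfl⟩, he⟩
      obtain rfl : e = 0 := he
      exact h x hx)
  obtain ⟨δ, hδ, hb⟩ := Metric.isOpen_iff.1 hv 0 (hv' rfl)
  refine ⟨δ, hδ, fun x hx p hp => huv ⟨hu' ⟨x, hx, rfl⟩, hb ?_⟩⟩
  simpa using hp

lemma rank_ge_iff_cov {m n l : ℕ} (A : Matrix (Fin m) (Fin n) ℂ) :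
    l ≤ A.rank ↔ ∃ (Q : Matrix (Fin l) (Fin m) ℂ) (E : Matrix (Fin n) (Fin l) ℂ),
      (Q * A * E).det ≠ 0 := by
  constructor
  · intro h
    rw [Matrix.rank] at h
    obtain ⟨f, hf⟩ := exists_linearIndependent_of_le_finrank h
    have hf' : LinearIndependent ℂ (fun i => (f i : Fin m → ℂ)) :=
      hf.map' (Submodule.subtype _) (Submodule.ker_subtype _)
    choose e he using fun i => (f i).2
    let E : Matrix (Fin n) (Fin l) ℂ := Matrix.of fun i j => e j i
    have hAE : (A * E)ᵀ = fun i => (f i : Fin m → ℂ) := by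
      ext i j
      have := congrFun (he i) j
      rw [← this]
      simp [E, Matrix.mul_apply, Matrix.mulVec, dotProduct]
    have hrank : (A * E).rank = l := by
      rw [← Matrix.rank_transpose]
      have : LinearIndependent ℂ ((A * E)ᵀ).row := by
        rw [hAE]; exact hf'
      simpa using this.rank_matrix
    refine ⟨(A * E)ᴴ, E, ?_⟩
    rw [Matrix.mul_assoc]
    have h2 : ((A * E)ᴴ * (A * E)).rank = l := by
      rw [Matrix.rank_conjTranspose_mul_self, hrank]
    have h3 : Function.Surjective ((A * E)ᴴ * (A * E)).mulVec := by
      have h4 : ((A * E)ᴴ * (A * E)).mulVecLin.range = ⊤ := by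
        apply Submodule.eq_top_of_finrank_eq
        rw [← Matrix.rank, h2]
        simp
      exact LinearMap.range_eq_top.1 h4
    rw [Matrix.mulVec_surjective_iff_isUnit, Matrix.isUnit_iff_isUnit_det] at h3
    exact h3.ne_zero
  · rintro ⟨Q, E, h⟩
    have h1 : (Q * A * E).rank = l := by
      simpa using Matrix.rank_of_isUnit _ ((Matrix.isUnit_iff_isUnit_det _).2 (isUnit_iff_ne_zero.2 h))
    rw [← h1]
    exact (Matrix.rank_mul_le_left _ _).trans (Matrix.rank_mul_le_right _ _)

lemma isOpen_rank_ge_cov (m n l : ℕ) : IsOpen {A : Matrix (Fin m) (Fin n) ℂ | l ≤ A.rank} := by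
  simp only [rank_ge_iff_cov, Set.ofPred_exists]
  refine isOpen_iUnion fun Q => isOpen_iUnion fun E => ?_
  refine isOpen_ne.preimage (f := fun A : Matrix (Fin m) (Fin n) ℂ => (Q * A * E).det) ?_
  fun_prop

lemma covLocalStep {X : Type*} [MetricSpace X] [CompactSpace X] {d : ℕ}
    (hcov : HasCovDimLE X d) {n l : ℕ} (a : C(X, Matrix (Fin n) (Fin n) ℂ))
    {A K : Set X} (hA : IsClosed A) (hK : IsClosed K)
    (Q : Matrix (Fin l) (Fin n) ℂ) (E : Matrix (Fin n) (Fin l) ℂ)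
    (hQ : ∀ x ∈ K, (Q * a x * E).det ≠ 0)
    (w : C(X, Matrix (Fin (l + d)) (Fin n) ℂ)) (hw : ∀ x ∈ A, l ≤ (w x * a x).rank) :
    ∃ w' : C(X, Matrix (Fin (l + d)) (Fin n) ℂ), ∀ x ∈ A ∪ K, l ≤ (w' x * a x).rank := by
  -- the function `w a E M⁻¹` on `K`, transposed
  let g0 : K → (Fin l → Fin (l + d) → ℂ) := fun x i j =>
    ((w x * a x * E) * (Q * a x * E)⁻¹) j i
  have hg0 : Continuous g0 := by
    have h1 : Continuous fun x : K => (w x * a x * E) * (Q * a x * E)⁻¹ := by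
      have h2 : Continuous fun x : K => (Q * a x * E).det := by fun_prop
      have h3 : Continuous fun x : K => (Q * a x * E).adjugate := by fun_prop
      have h4 : Continuous fun x : K => ((Q * a x * E).det)⁻¹ • (Q * a x * E).adjugate :=
        (h2.inv₀ (fun x => hQ x x.2)).smul h3
      have h5 : Continuous fun x : K => (Q * a x * E)⁻¹ := by
        simpa only [Matrix.inv_def, Ring.inverse_eq_inv'] using h4
      have h6 : Continuous fun x : K => w x * a x * E := by fun_prop
      exact h6.matrix_mul h5
    exact continuous_pi fun i => continuous_pi fun j => h1.matrix_elem j i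
  obtain ⟨g, hg⟩ := ContinuousMap.exists_restrict_eq hK ⟨g0, hg0⟩
  -- robustness on `A`
  let T : (Fin l → Fin (l + d) → ℂ) → Matrix (Fin (l + d)) (Fin l) ℂ := fun p =>
    Matrix.of fun j i => p i j
  have hT : Continuous T := continuous_matrix fun i j => by
    simp only [T, Matrix.of_apply]; fun_prop
  obtain ⟨δ, hδ, hδ'⟩ := covTube (E := Fin l → Fin (l + d) → ℂ) hA.isCompact
    (f := fun x => (w x, a x)) (by fun_prop)
    (U := {y | l ≤ ((y.1.1 + T y.2 * Q) * y.1.2).rank})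
    ((isOpen_rank_ge_cov (l + d) n l).preimage
      (f := fun y : (Matrix (Fin (l + d)) (Fin n) ℂ × Matrix (Fin n) (Fin n) ℂ) ×
        (Fin l → Fin (l + d) → ℂ) => (y.1.1 + T y.2 * Q) * y.1.2) (by fun_prop))
    (by
      intro x hx
      have : T 0 = 0 := by ext; simp [T]
      simpa [this] using hw x hx)
  obtain ⟨g', hg', hli⟩ := covApprox1 hcov (m := l) (n := l + d) (by omega) g hδ
  refine ⟨⟨fun x => w x + T (g' x - g x) * Q, by fun_prop⟩, ?_⟩
  rintro x (hx | hx)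
  · exact hδ' x hx _ (hg' x)
  · have hgx : g x = g0 ⟨x, hx⟩ := congrArg (fun f => f ⟨x, hx⟩) hg
    have hM : IsUnit (Q * a x * E).det := isUnit_iff_ne_zero.2 (hQ x hx)
    have h1 : (w x + T (g' x - g x) * Q) * a x * E * (Q * a x * E)⁻¹ = T (g' x) := by
      have h2 : (w x * a x * E) * (Q * a x * E)⁻¹ = T (g x) := by
        rw [hgx]; ext i j; rfl
      have h3 : T (g' x - g x) = T (g' x) - T (g x) := by ext; simp [T]
      have h4 : (w x + T (g' x - g x) * Q) * a x * E * (Q * a x * E)⁻¹ =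
          (w x * a x * E) * (Q * a x * E)⁻¹ +
            T (g' x - g x) * ((Q * a x * E) * (Q * a x * E)⁻¹) := by
        simp only [Matrix.add_mul, Matrix.mul_assoc]
      rw [h4, Matrix.mul_nonsing_inv _ hM, h2, h3]
      simp
    have h5 : (T (g' x)).rank = l := by
      rw [← Matrix.rank_transpose]
      have : LinearIndependent ℂ ((T (g' x))ᵀ).row := hli x
      simpa using this.rank_matrix
    show l ≤ ((w x + T (g' x - g x) * Q) * a x).rank
    calc l = (T (g' x)).rank := h5.symm
      _ ≤ _ := by
        rw [← h1]
        exact (Matrix.rank_mul_le_left _ _).trans (Matrix.rank_mul_le_left _ _)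

lemma covSelect {X : Type*} [MetricSpace X] [CompactSpace X] {d : ℕ}
    (hcov : HasCovDimLE X d) {n l : ℕ} (a : C(X, Matrix (Fin n) (Fin n) ℂ))
    (ha : ∀ x, l ≤ (a x).rank) :
    ∃ w : C(X, Matrix (Fin (l + d)) (Fin n) ℂ), ∀ x, l ≤ (w x * a x).rank := by
  classical
  choose Q E hQE using fun x => (rank_ge_iff_cov (a x)).1 (ha x)
  have hK : ∀ x, ∃ K ∈ nhds x, IsClosed K ∧ K ⊆ {y | (Q x * a y * E x).det ≠ 0} := by
    intro x
    have ho : IsOpen {y | (Q x * a y * E x).det ≠ 0} :=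
      isOpen_ne.preimage (f := fun y => (Q x * a y * E x).det) (by fun_prop)
    exact exists_mem_nhds_isClosed_subset (ho.mem_nhds (hQE x))
  choose K hKn hKc hKs using hK
  obtain ⟨T, hT⟩ := CompactSpace.elim_nhds_subcover K hKn
  suffices h : ∀ T : Finset X, ∃ w : C(X, Matrix (Fin (l + d)) (Fin n) ℂ),
      ∀ y ∈ ⋃ x ∈ T, K x, l ≤ (w y * a y).rank by
    obtain ⟨w, hw⟩ := h T
    exact ⟨w, fun x => hw x (hT.ge trivial)⟩
  intro T
  induction T using Finset.induction_on with
  | empty => exact ⟨0, by simp⟩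
  | insert t T ht ih =>
    obtain ⟨w, hw⟩ := ih
    obtain ⟨w', hw'⟩ := covLocalStep hcov a
      (isClosed_biUnion_finset (s := T) fun x _ => hKc x) (hKc t) (Q t) (E t)
      (fun x hx => hKs t hx) w hw
    refine ⟨w', fun y hy => hw' y ?_⟩
    rw [Finset.set_biUnion_insert] at hy
    exact hy.symm

/-- The set of the theorem. -/
def covSet (X : Type*) [TopologicalSpace X] (n l k : ℕ) : Set C(X, Matrix (Fin n) (Fin n) ℂ) :=
  {c | (∀ x, (c x).PosSemidef) ∧ ∀ x, l ≤ (c x).rank ∧ (c x).rank ≤ k}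

lemma covJoined {X : Type*} [TopologicalSpace X] {n l k : ℕ}
    {a b : C(X, Matrix (Fin n) (Fin n) ℂ)} (H : unitInterval × X → Matrix (Fin n) (Fin n) ℂ)
    (hH : Continuous H) (h0 : ∀ x, H (0, x) = a x) (h1 : ∀ x, H (1, x) = b x)
    (hp : ∀ t x, (H (t, x)).PosSemidef)
    (hr : ∀ t x, l ≤ (H (t, x)).rank ∧ (H (t, x)).rank ≤ k) :
    JoinedIn (covSet X n l k) a b := by
  let γ : C(unitInterval, C(X, Matrix (Fin n) (Fin n) ℂ)) := ContinuousMap.curry ⟨H, hH⟩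
  refine ⟨⟨γ, ?_, ?_⟩, ?_⟩
  · ext1 x; exact h0 x
  · ext1 x; exact h1 x
  · intro t
    exact ⟨fun x => hp t x, fun x => hr t x⟩

lemma covRankAdd {n : ℕ} {P Q : Matrix (Fin n) (Fin n) ℂ} (hP : P.PosSemidef)
    (hQ : Q.PosSemidef) : P.rank ≤ (P + Q).rank := by
  have hker : (P + Q).mulVecLin.ker ≤ P.mulVecLin.ker := by
    intro v hv
    have hv' : (P + Q) *ᵥ v = 0 := hv
    have h1 : star v ⬝ᵥ (P *ᵥ v) + star v ⬝ᵥ (Q *ᵥ v) = 0 := by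
      rw [← dotProduct_add, ← Matrix.add_mulVec, hv', dotProduct_zero]
    have h2 := hP.dotProduct_mulVec_nonneg v
    have h3 := hQ.dotProduct_mulVec_nonneg v
    have h4 : star v ⬝ᵥ (P *ᵥ v) = 0 := ((add_eq_zero_iff_of_nonneg h2 h3).1 h1).1
    exact (hP.dotProduct_mulVec_zero_iff v).1 h4
  have e1 := (P + Q).mulVecLin.finrank_range_add_finrank_ker
  have e2 := P.mulVecLin.finrank_range_add_finrank_ker
  have e3 := Submodule.finrank_mono hker
  rw [Matrix.rank, Matrix.rank]
  omega

/-- From `a` to `s* s` with `s = w a`. -/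
lemma covJoined_select {X : Type*} [TopologicalSpace X] {n m l k : ℕ}
    {a : C(X, Matrix (Fin n) (Fin n) ℂ)} (ha : a ∈ covSet X n l k)
    (w : C(X, Matrix (Fin m) (Fin n) ℂ)) (hw : ∀ x, l ≤ (w x * a x).rank)
    (s : C(X, Matrix (Fin m) (Fin n) ℂ)) (hs : ∀ x, s x = w x * a x)
    (b : C(X, Matrix (Fin n) (Fin n) ℂ)) (hb : ∀ x, b x = (s x)ᴴ * s x) :
    JoinedIn (covSet X n l k) a b := by
  obtain ⟨hpos, hrk⟩ := ha
  have hp : ∀ (t : unitInterval) x,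
      (((1 - (t : ℝ) : ℝ) : ℂ) • a x).PosSemidef ∧ (((t : ℝ) : ℂ) • ((s x)ᴴ * s x)).PosSemidef := by
    intro t x
    refine ⟨(hpos x).smul ?_, (Matrix.posSemidef_conjTranspose_mul_self (s x)).smul ?_⟩
    · exact_mod_cast sub_nonneg.2 t.2.2
    · exact_mod_cast t.2.1
  refine covJoined (fun y => ((1 - (y.1 : ℝ) : ℝ) : ℂ) • a y.2 +
    ((y.1 : ℝ) : ℂ) • ((s y.2)ᴴ * s y.2)) (by fun_prop) ?_ ?_ ?_ ?_
  · intro x; simp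
  · intro x; simp [hb]
  · intro t x; exact (hp t x).1.add (hp t x).2
  · intro t x
    constructor
    · by_cases ht : (t : ℝ) = 1
      · simp only [ht]
        have h1 : ((1 - (1 : ℝ) : ℝ) : ℂ) • a x + ((1 : ℝ) : ℂ) • ((s x)ᴴ * s x)
            = (s x)ᴴ * s x := by simp
        rw [h1, Matrix.rank_conjTranspose_mul_self, hs]
        exact hw x
      · refine le_trans ?_ (covRankAdd (hp t x).1 (hp t x).2)
        have hne : ((1 - (t : ℝ) : ℝ) : ℂ) ≠ 0 := by
          exact_mod_cast sub_ne_zero.2 (Ne.symm ht)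
        have h1 : (((1 - (t : ℝ) : ℝ) : ℂ) • a x).rank = (a x).rank := by
          exact Matrix.rank_smul_of_mem_nonZeroDivisors _ (mem_nonZeroDivisors_of_ne_zero hne)
        rw [h1]
        exact (hrk x).1
    · have h1 : ((1 - (t : ℝ) : ℝ) : ℂ) • a x + ((t : ℝ) : ℂ) • ((s x)ᴴ * s x) =
          (((1 - (t : ℝ) : ℝ) : ℂ) • 1 + ((t : ℝ) : ℂ) • ((s x)ᴴ * w x)) * a x := by
        rw [Matrix.add_mul, Matrix.smul_mul, Matrix.smul_mul, Matrix.one_mul, Matrix.mul_assoc,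
          ← hs]
      show (((1 - (t : ℝ) : ℝ) : ℂ) • a x + ((t : ℝ) : ℂ) • ((s x)ᴴ * s x)).rank ≤ k
      rw [h1]
      exact (Matrix.rank_mul_le_right _ _).trans (hrk x).2

/-- A homotopy of matrices of rank at least `l` gives a path. -/
lemma covJoined_homotopy {X : Type*} [TopologicalSpace X] {n m l k : ℕ} (hmk : m ≤ k)
    (H : unitInterval × X → Matrix (Fin m) (Fin n) ℂ) (hH : Continuous H)
    (hr : ∀ t x, l ≤ (H (t, x)).rank)
    (a b : C(X, Matrix (Fin n) (Fin n) ℂ)) (ha : ∀ x, a x = (H (0, x))ᴴ * H (0, x))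
    (hb : ∀ x, b x = (H (1, x))ᴴ * H (1, x)) :
    JoinedIn (covSet X n l k) a b := by
  refine covJoined (fun y => (H y)ᴴ * H y) (by fun_prop) (fun x => (ha x).symm)
    (fun x => (hb x).symm) (fun t x => Matrix.posSemidef_conjTranspose_mul_self _) ?_
  intro t x
  rw [Matrix.rank_conjTranspose_mul_self]
  refine ⟨hr t x, (Matrix.rank_le_card_height _).trans ?_⟩
  simpa using hmk

lemma covNear {X : Type*} [TopologicalSpace X] [CompactSpace X] {m n l : ℕ}
    (s : C(X, Matrix (Fin m) (Fin n) ℂ)) (hs : ∀ x, l ≤ (s x).rank) :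
    ∃ δ > 0, ∀ x, ∀ p : Fin m → Fin n → ℂ, ‖p‖ < δ → l ≤ (s x + Matrix.of p).rank := by
  have hof : Continuous fun p : Fin m → Fin n → ℂ => (Matrix.of p : Matrix (Fin m) (Fin n) ℂ) :=
    continuous_matrix fun i j => by simp only [Matrix.of_apply]; fun_prop
  obtain ⟨δ, hδ, h⟩ := covTube (E := Fin m → Fin n → ℂ) isCompact_univ (f := s) s.continuous
    (U := {y | l ≤ (y.1 + Matrix.of y.2).rank})
    ((isOpen_rank_ge_cov m n l).preimage
      (f := fun y : Matrix (Fin m) (Fin n) ℂ × (Fin m → Fin n → ℂ) => y.1 + Matrix.of y.2)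
      (continuous_fst.add (hof.comp continuous_snd)))
    (by
      intro x _
      have : (Matrix.of (0 : Fin m → Fin n → ℂ)) = 0 := rfl
      simpa [this] using hs x)
  exact ⟨δ, hδ, fun x p hp => h x trivial p hp⟩

/-- The square `s* s` as a continuous map. -/
noncomputable def covSq {X : Type*} [TopologicalSpace X] {m n : ℕ} (s : C(X, Matrix (Fin m) (Fin n) ℂ)) :
    C(X, Matrix (Fin n) (Fin n) ℂ) :=
  ⟨fun x => (s x)ᴴ * s x, by fun_prop⟩

/-- Read a continuous array-valued map as a matrix-valued one. -/
noncomputable def covOf {X : Type*} [TopologicalSpace X] {m n : ℕ} (s : C(X, Fin m → Fin n → ℂ)) :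
    C(X, Matrix (Fin m) (Fin n) ℂ) :=
  ⟨fun x => Matrix.of (s x), continuous_matrix fun i j => by
    simp only [Matrix.of_apply]; fun_prop⟩

lemma covJoined_near {X : Type*} [TopologicalSpace X] {n m l k : ℕ} (hmk : m ≤ k)
    (s : C(X, Matrix (Fin m) (Fin n) ℂ)) {δ : ℝ}
    (hδ : ∀ x, ∀ p : Fin m → Fin n → ℂ, ‖p‖ < δ → l ≤ (s x + Matrix.of p).rank)
    (s' : C(X, Fin m → Fin n → ℂ)) (hs' : ∀ x, ‖s' x - Matrix.of.symm (s x)‖ < δ) :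
    JoinedIn (covSet X n l k) (covSq s) (covSq (covOf s')) := by
  refine covJoined_homotopy hmk
    (fun y => s y.2 + ((y.1 : ℝ) : ℂ) • (covOf s' y.2 - s y.2)) (by fun_prop) ?_ _ _ ?_ ?_
  · intro t x
    have h1 : ‖((t : ℝ) : ℂ) • (s' x - Matrix.of.symm (s x))‖ < δ := by
      rw [norm_smul]
      refine lt_of_le_of_lt ?_ (hs' x)
      refine mul_le_of_le_one_left (norm_nonneg _) ?_
      rw [Complex.norm_real, Real.norm_of_nonneg t.2.1]
      exact t.2.2
    exact hδ x _ h1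
  · intro x; simp [covSq]
  · intro x; simp [covSq]

lemma covMain {X : Type*} [MetricSpace X] [CompactSpace X] {d : ℕ} (hcov : HasCovDimLE X d)
    {n l k : ℕ} (hkn : k ≤ n) (hlk : l + 4 * d ≤ k)
    {a b : C(X, Matrix (Fin n) (Fin n) ℂ)} (ha : a ∈ covSet X n l k) (hb : b ∈ covSet X n l k) :
    JoinedIn (covSet X n l k) a b := by
  obtain ⟨v, hv⟩ := covSelect hcov a fun x => (ha.2 x).1
  obtain ⟨w, hw⟩ := covSelect hcov b fun x => (hb.2 x).1
  let s : C(X, Matrix (Fin (l + d)) (Fin n) ℂ) := ⟨fun x => v x * a x, by fun_prop⟩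
  let t : C(X, Matrix (Fin (l + d)) (Fin n) ℂ) := ⟨fun x => w x * b x, by fun_prop⟩
  obtain ⟨δ₁, hδ₁, h₁⟩ := covNear s hv
  obtain ⟨δ₂, hδ₂, h₂⟩ := covNear t hw
  obtain ⟨s', t', hs', ht', hli⟩ := covApprox2 hcov (m := l + d) (n := n) (by omega)
    ⟨fun x => Matrix.of.symm (s x), continuous_pi fun i => continuous_pi fun j =>
      s.continuous.matrix_elem i j⟩
    ⟨fun x => Matrix.of.symm (t x), continuous_pi fun i => continuous_pi fun j =>
      t.continuous.matrix_elem i j⟩ (lt_min hδ₁ hδ₂)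
  have hmk : l + d ≤ k := by omega
  have e1 : JoinedIn (covSet X n l k) a (covSq s) :=
    covJoined_select ha v hv s (fun _ => rfl) _ (fun _ => rfl)
  have e2 : JoinedIn (covSet X n l k) (covSq s) (covSq (covOf s')) :=
    covJoined_near hmk s h₁ s' fun x => lt_of_lt_of_le (hs' x) (min_le_left _ _)
  have e4 : JoinedIn (covSet X n l k) (covSq t) (covSq (covOf t')) :=
    covJoined_near hmk t h₂ t' fun x => lt_of_lt_of_le (ht' x) (min_le_right _ _)
  have e5 : JoinedIn (covSet X n l k) b (covSq t) :=
    covJoined_select hb w hw t (fun _ => rfl) _ (fun _ => rfl)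
  have e3 : JoinedIn (covSet X n l k) (covSq (covOf s')) (covSq (covOf t')) := by
    refine covJoined_homotopy hmk (fun y => (1 - (y.1 : ℝ)) • covOf s' y.2 +
      (y.1 : ℝ) • covOf t' y.2) (by fun_prop) ?_ _ _ ?_ ?_
    · intro τ x
      have h : LinearIndependent ℂ
          (((1 - (τ : ℝ)) • covOf s' x + (τ : ℝ) • covOf t' x).row) := hli x τ
      have h' := h.rank_matrix
      rw [Fintype.card_fin] at h'
      exact le_trans (Nat.le_add_right l d) h'.ge
    · intro x; simp [covSq]
    · intro x; simp [covSq]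
  exact e1.trans (e2.trans (e3.trans (e4.symm.trans e5.symm)))

end CovProof

/-- On a compact metric space `X` of finite covering dimension `d`, with
`k ≤ n` and `4d ≤ k - l`, the set of positive elements of `M_n(C(X))` whose pointwise rank
lies in `[l, k]` is path connected: any two of its points are joined by a path inside it. -/
theorem stmt4 {X : Type*} [MetricSpace X] [CompactSpace X] (d : ℕ) (hdim : IsCovDim X d)
    (n l k : ℕ) (hn : 0 < n) (hkn : k ≤ n) (hlk : l + 4 * d ≤ k) :
    ∀ a ∈ {c : C(X, Matrix (Fin n) (Fin n) ℂ) |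
        (∀ x, (c x).PosSemidef) ∧ ∀ x, l ≤ (c x).rank ∧ (c x).rank ≤ k},
      ∀ b ∈ {c : C(X, Matrix (Fin n) (Fin n) ℂ) |
        (∀ x, (c x).PosSemidef) ∧ ∀ x, l ≤ (c x).rank ∧ (c x).rank ≤ k},
        JoinedIn {c : C(X, Matrix (Fin n) (Fin n) ℂ) |
          (∀ x, (c x).PosSemidef) ∧ ∀ x, l ≤ (c x).rank ∧ (c x).rank ≤ k} a b := by
  intro a ha b hb
  exact covMain hdim.1 hkn hlk ha hb
end
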